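/- arXiv:2010.09972 — 2 statements merged into one kernel-verified Lean document; each statement's English description precedes it below -/
import Mathlib

section
/- Let s > 7/2 and suppose (ξ_k)_{k≥1} satisfies Σ_{k≥1} ‖ξ_k‖_{H^σ} < ∞ for every σ ≥ 0. Define, for θ ∈ H^s(𝕋), g(θ) = −(𝓗θ) ∂_x θ + ½ Σ_{k=1}^∞ 𝓛²_{ξ_k} θ. Then there is a constant C > 0 (depending on s and (ξ_k)) such that for all θ, ρ ∈ H^s(𝕋): 2 (g(θ) − g(ρ), θ − ρ)_{H^{s-2}} + Σ_{k=1}^∞ ‖𝓛_{ξ_k}(θ − ρ)‖²_{H^{s-2}} ≤ C (1 + ‖θ‖²_{H^s} + ‖ρ‖²_{H^s}) ‖θ − ρ‖²_{H^{s-2}}. -/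
noncomputable section
open scoped BigOperators

/-- A (complex-valued) function on the torus `𝕋 = ℝ/2πℤ`, represented by its sequence of
Fourier coefficients `f̂ : ℤ → ℂ`. -/
abbrev FC := ℤ → ℂ

namespace FC

/-- The Sobolev weight `(1+k²)^s`. -/
def wt (s : ℝ) (k : ℤ) : ℝ := (1 + (k : ℝ) ^ 2) ^ s

/-- `c` represents a function belonging to the Sobolev space `H^s(𝕋)`. -/
def memHs (s : ℝ) (c : FC) : Prop := Summable fun k : ℤ => wt s k * ‖c k‖ ^ 2

/-- The `H^s(𝕋)` norm: `‖f‖²_{H^s} = Σ_{k∈ℤ} (1+k²)^s |f̂(k)|²`. -/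
def hsNorm (s : ℝ) (c : FC) : ℝ := Real.sqrt (∑' k : ℤ, wt s k * ‖c k‖ ^ 2)

/-- The `H^s(𝕋)` inner product `(f,g)_{H^s} = Σ_{k∈ℤ} (1+k²)^s f̂(k) conj(ĝ(k))`
(its real part; the sum is real for real-valued functions). -/
def hsInner (s : ℝ) (c d : FC) : ℝ :=
  (∑' k : ℤ, ((wt s k : ℂ) * (c k * (starRingEnd ℂ) (d k)))).re

/-- `c` represents a real-valued function (conjugate-symmetric coefficients). -/
def isReal (c : FC) : Prop := ∀ k : ℤ, c (-k) = (starRingEnd ℂ) (c k)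

/-- The derivative `∂ₓ`, i.e. the Fourier multiplier `ik`. -/
def D1 (c : FC) : FC := fun k => Complex.I * (k : ℂ) * c k

/-- The pointwise product of functions, i.e. convolution of Fourier coefficients. -/
def mul (c d : FC) : FC := fun k => ∑' j : ℤ, c j * d (k - j)

/-- The represented function, evaluated at `x ∈ ℝ`. -/
def eval (c : FC) (x : ℝ) : ℂ := ∑' k : ℤ, c k * Complex.exp (Complex.I * (k : ℂ) * (x : ℂ))

/-- The `L^∞` norm (supremum of the represented periodic function over ℝ). -/
def linfty (c : FC) : ℝ := ⨆ x : ℝ, ‖eval c x‖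

/-- The `W^{1,∞}` norm. -/
def w1infty (c : FC) : ℝ := linfty c + linfty (D1 c)

/-- A Fourier multiplier operator with real symbol `m`. -/
def mult (m : ℤ → ℝ) (c : FC) : FC := fun k => (m k : ℂ) * c k

/-- The operator `(1-∂ₓ²)⁻¹`, i.e. the Fourier multiplier `(1+k²)⁻¹`. -/
def helmInv : FC → FC := mult fun k => (1 + (k : ℝ) ^ 2)⁻¹

/-- The operator `1-∂ₓ²`, i.e. the Fourier multiplier `1+k²`. -/
def helm : FC → FC := mult fun k => 1 + (k : ℝ) ^ 2

/-- The operator `T̃_ε = (1-ε²∂ₓ²)⁻¹`, i.e. the Fourier multiplier `(1+ε²k²)⁻¹`. -/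
def T (ε : ℝ) : FC → FC := mult fun k => (1 + ε ^ 2 * (k : ℝ) ^ 2)⁻¹

/-- The periodic Hilbert transform, i.e. the Fourier multiplier `-i·sgn(k)`. -/
def hilbert (c : FC) : FC := fun k => -Complex.I * (Int.sign k : ℂ) * c k

/-- The Friedrichs-type mollifier `J_ε`, the Fourier multiplier `ĵ(εk)`. -/
def Jmol (jhat : ℝ → ℝ) (ε : ℝ) : FC → FC := mult fun k => jhat (ε * (k : ℝ))

/-- The generalized Lie derivative `𝓛_ξ f = ξ ∂ₓ f + (∂ₓ ξ) f`. -/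
def lie (ξ c : FC) : FC := mul ξ (D1 c) + mul (D1 ξ) c

/-- `𝓛²_ξ f = 𝓛_ξ (𝓛_ξ f)`. -/
def lie2 (ξ c : FC) : FC := lie ξ (lie ξ c)

/-- The coefficientwise sum `Σ_{k∈ℕ} F k` of a sequence of functions. -/
def tsumFC (F : ℕ → FC) : FC := fun m => ∑' k : ℕ, F k m

/-- The norm on the product space `H^{s₁}×H^{s₂}`. -/
def pairNorm (s₁ s₂ : ℝ) (c d : FC) : ℝ := Real.sqrt (hsNorm s₁ c ^ 2 + hsNorm s₂ d ^ 2)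

/-- The inner product on the product space `H^{s₁}×H^{s₂}`:
`((c₁,d₁),(c₂,d₂)) ↦ (c₁,c₂)_{H^{s₁}} + (d₁,d₂)_{H^{s₂}}`. -/
def pairInner (s₁ s₂ : ℝ) (c₁ d₁ c₂ d₂ : FC) : ℝ := hsInner s₁ c₁ c₂ + hsInner s₂ d₁ d₂

end FC

/-- The singular drift of the stochastic CCF model:
`g(θ) = −(𝓗θ) ∂ₓθ + ½ Σ_k 𝓛²_{ξ_k} θ`. -/
def gCCF (ξ : ℕ → FC) (θ : FC) : FC :=
  -(FC.mul (FC.hilbert θ) (FC.D1 θ)) + (1 / 2 : ℝ) • FC.tsumFC fun k => FC.lie2 (ξ k) θ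

/-!
Put `r = s - 2`, `v = θ - ρ`, and write every term as an absolutely convergent Fourier series.

For one noise coefficient `ξ`, both `(𝓛²_ξ v, v)` and `‖𝓛_ξ v‖²` in `H^r` are sums over paths of
frequencies `k, m, j` of a symbol times `ξ̂(k - m) ξ̂(m - j) v̂(j) conj v̂(k)`; each one alone costs
a derivative of `v`. Reversing the path (this is where `ξ` real enters) and exchanging the two
jumps `k - m` and `m - j` leave the product of coefficients invariant up to conjugation. Averaged
over these symmetries, the symbol of the sum of the two terms consists of `k - j` times the first
difference of `x (1 + x²)^r` between `j` and `k`, and of a second difference of `x² (1 + x²)^r`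
along the two jumps. It has order `2 r`: both lost derivatives have moved to `ξ`.

The transport term `𝓗ρ ∂ₓv` loses no derivative by the same argument with one jump, a commutator
estimate, and in the remaining term `𝓗v ∂ₓθ` the derivative already falls on `θ`. Peetre's
inequality distributes the weights over the frequencies, and the Schur test bounds the resulting
series by `ℓ¹` norms of `ξ̂`, `θ̂`, `ρ̂` and the `H^r` norm of `v`.
-/

namespace FC

/-! ### The weights `(1 + x ^ 2) ^ p` -/

/-- The Sobolev weight `(1 + x²)^p` at a real frequency `x`; at an integer frequency it is `wt p`
by definition. -/
def weight (p x : ℝ) : ℝ := (1 + x ^ 2) ^ p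

lemma weight_pos (p x : ℝ) : 0 < weight p x := Real.rpow_pos_of_pos (by positivity) p

lemma weight_nonneg (p x : ℝ) : 0 ≤ weight p x := (weight_pos p x).le

lemma weight_one (x : ℝ) : weight 1 x = 1 + x ^ 2 := Real.rpow_one _

lemma weight_neg (p x : ℝ) : weight p (-x) = weight p x := by simp [weight]

lemma weight_abs (p x : ℝ) : weight p |x| = weight p x := by simp [weight]

lemma weight_exponent_add (p q x : ℝ) : weight (p + q) x = weight p x * weight q x :=
  Real.rpow_add (by positivity) p q

lemma weight_half_mul_self (p x : ℝ) : weight (p / 2) x * weight (p / 2) x = weight p x := by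
  rw [← weight_exponent_add, add_halves]

lemma weight_half_sq (p x : ℝ) : weight (p / 2) x ^ 2 = weight p x := by
  rw [sq, weight_half_mul_self]

lemma weight_exponent_mono {p q : ℝ} (h : p ≤ q) (x : ℝ) : weight p x ≤ weight q x :=
  Real.rpow_le_rpow_of_exponent_le (by nlinarith) h

lemma weight_le_of_abs_le {p : ℝ} (hp : 0 ≤ p) {x y : ℝ} (h : |x| ≤ |y|) :
    weight p x ≤ weight p y :=
  Real.rpow_le_rpow (by positivity) (by linarith [sq_le_sq.mpr h]) hp

lemma abs_le_weight_half (x : ℝ) : |x| ≤ weight (1 / 2) x := by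
  rw [weight, ← Real.sqrt_eq_rpow]
  exact Real.abs_le_sqrt (by linarith)

lemma abs_mul_weight_le (p x : ℝ) : |x| * weight p x ≤ weight (p + 1 / 2) x := by
  rw [add_comm, weight_exponent_add]
  exact mul_le_mul_of_nonneg_right (abs_le_weight_half x) (weight_nonneg p x)

lemma sq_mul_weight (p x : ℝ) : x ^ 2 * weight p x = weight (p + 1) x - weight p x := by
  rw [weight_exponent_add, weight_one]
  ring

lemma sq_mul_weight_sub_one_le (p x : ℝ) : x ^ 2 * weight (p - 1) x ≤ weight p x := by
  rw [sq_mul_weight, sub_add_cancel]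
  linarith [weight_nonneg (p - 1) x]

/-- Peetre's inequality. -/
lemma weight_add_le {p : ℝ} (hp : 0 ≤ p) (x y : ℝ) :
    weight p (x + y) ≤ 2 ^ p * (weight p x * weight p y) := by
  simp only [weight]
  rw [← Real.mul_rpow (by positivity) (by positivity),
    ← Real.mul_rpow (by norm_num) (by positivity)]
  refine Real.rpow_le_rpow (by positivity) ?_ hp
  nlinarith [sq_nonneg (x - y), sq_nonneg (x * y)]

lemma weight_le_sub_mul {p : ℝ} (hp : 0 ≤ p) (x y : ℝ) :
    weight p x ≤ 2 ^ p * (weight p (x - y) * weight p y) := by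
  simpa only [sub_add_cancel] using weight_add_le hp (x - y) y

lemma weight_le_of_abs_le_max {p x y z : ℝ} (hp : 0 ≤ p) (hz : |z| ≤ max |x| |y|) :
    weight p z ≤ 2 ^ (p / 2) * (weight (p / 2) (x - y) *
      (weight (p / 2) x * weight (p / 2) y)) := by
  have half_nonneg : 0 ≤ p / 2 := by positivity
  rcases le_max_iff.mp hz with h | h
  · calc weight p z ≤ weight (p / 2) x * weight (p / 2) x :=
          (weight_le_of_abs_le hp h).trans_eq (weight_half_mul_self p x).symm
      _ ≤ weight (p / 2) x * (2 ^ (p / 2) * (weight (p / 2) (x - y) * weight (p / 2) y)) :=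
          mul_le_mul_of_nonneg_left (weight_le_sub_mul half_nonneg x y) (weight_nonneg _ _)
      _ = _ := by ring
  · calc weight p z ≤ weight (p / 2) y * weight (p / 2) y :=
          (weight_le_of_abs_le hp h).trans_eq (weight_half_mul_self p y).symm
      _ ≤ weight (p / 2) y * (2 ^ (p / 2) * (weight (p / 2) (y - x) * weight (p / 2) x)) :=
          mul_le_mul_of_nonneg_left (weight_le_sub_mul half_nonneg y x) (weight_nonneg _ _)
      _ = _ := by rw [← neg_sub x y, weight_neg]; ring

lemma weight_le_of_abs_sub_le {p x y z a b : ℝ} (hp : 0 ≤ p) (hx : |z - x| ≤ |a| + |b|)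
    (hy : |z - y| ≤ |a| + |b|) :
    weight p z ≤ 4 ^ p * (weight p a * weight p b) * (weight (p / 2) x * weight (p / 2) y) := by
  have half_bound (t : ℝ) (ht : |z - t| ≤ |a| + |b|) : weight (p / 2) z ≤
      4 ^ (p / 2) * (weight (p / 2) a * weight (p / 2) b) * weight (p / 2) t := by
    have half_nonneg : 0 ≤ p / 2 := by positivity
    calc weight (p / 2) z
        ≤ 2 ^ (p / 2) * (weight (p / 2) (|a| + |b|) * weight (p / 2) t) := by
          refine (weight_le_sub_mul half_nonneg z t).trans ?_
          have := weight_le_of_abs_le half_nonneg (ht.trans (le_abs_self _))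
          gcongr
          exact weight_nonneg _ _
      _ ≤ 2 ^ (p / 2) * (2 ^ (p / 2) * (weight (p / 2) a * weight (p / 2) b) *
            weight (p / 2) t) := by
          have := weight_add_le half_nonneg |a| |b|
          rw [weight_abs, weight_abs] at this
          gcongr
          exact weight_nonneg _ _
      _ = _ := by
          rw [show (4 : ℝ) = 2 * 2 by norm_num, Real.mul_rpow (by norm_num) (by norm_num)]
          ring
  calc weight p z = weight (p / 2) z * weight (p / 2) z := (weight_half_mul_self p z).symm
    _ ≤ _ := mul_le_mul (half_bound x hx) (half_bound y hy) (weight_nonneg _ _)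
        ((weight_nonneg _ _).trans (half_bound x hx))
    _ = _ := by
        rw [← weight_half_mul_self p a, ← weight_half_mul_self p b, ← add_halves p,
          Real.rpow_add (by norm_num)]
        simp only [add_halves]
        ring

lemma hasDerivAt_weight (p x : ℝ) :
    HasDerivAt (weight p) (2 * p * (x * weight (p - 1) x)) x := by
  have base : HasDerivAt (fun x : ℝ => 1 + x ^ 2) (2 * x) x := by
    simpa using (hasDerivAt_pow 2 x).const_add 1
  exact (base.rpow_const (p := p) (Or.inl (by positivity))).congr_deriv (by unfold weight; ring)

/-- The odd weight `x (1 + x²)^r`: the symbol, up to the factor `i`, of `∂ₓ (1 - ∂ₓ²)^r`. -/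
def oddWeight (r x : ℝ) : ℝ := x * weight r x

lemma hasDerivAt_oddWeight (r x : ℝ) :
    HasDerivAt (oddWeight r) (weight r x + 2 * r * (x ^ 2 * weight (r - 1) x)) x :=
  ((hasDerivAt_id x).mul (hasDerivAt_weight r x)).congr_deriv (by simp only [id]; ring)

lemma abs_deriv_oddWeight_le (r x : ℝ) :
    |weight r x + 2 * r * (x ^ 2 * weight (r - 1) x)| ≤ (1 + 2 * |r|) * weight r x := by
  have sq_le := sq_mul_weight_sub_one_le r x
  have sq_nonneg : 0 ≤ x ^ 2 * weight (r - 1) x := mul_nonneg (sq_nonneg x) (weight_nonneg _ _)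
  calc |weight r x + 2 * r * (x ^ 2 * weight (r - 1) x)|
      ≤ |weight r x| + |2 * r * (x ^ 2 * weight (r - 1) x)| := abs_add_le _ _
    _ = weight r x + 2 * |r| * (x ^ 2 * weight (r - 1) x) := by
        rw [abs_of_nonneg (weight_nonneg r x), abs_mul, abs_mul, abs_two, abs_of_nonneg sq_nonneg]
    _ ≤ weight r x + 2 * |r| * weight r x := by gcongr
    _ = _ := by ring

/-! ### Finite differences -/

lemma abs_image_sub_le_of_hasDerivAt {f f' : ℝ → ℝ} {x y C : ℝ}
    (hf : ∀ z, HasDerivAt f (f' z) z) (bound : ∀ z ∈ Set.uIcc x y, |f' z| ≤ C) :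
    |f y - f x| ≤ C * |y - x| :=
  Convex.norm_image_sub_le_of_norm_hasDerivWithin_le (fun z _ => (hf z).hasDerivWithinAt) bound
    (convex_uIcc x y) Set.left_mem_uIcc Set.right_mem_uIcc

lemma abs_second_difference_le {f f' f'' : ℝ → ℝ} {x a b C : ℝ}
    (hf : ∀ z, HasDerivAt f (f' z) z) (hf' : ∀ z, HasDerivAt f' (f'' z) z)
    (bound : ∀ z, |z - x| ≤ |a| + |b| → |z - (x + a + b)| ≤ |a| + |b| → |f'' z| ≤ C) :
    |f (x + a + b) + f x - f (x + a) - f (x + b)| ≤ C * |a| * |b| := by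
  have first_difference (z : ℝ) (hz : z ∈ Set.uIcc x (x + b)) : |f' (z + a) - f' z| ≤ C * |a| := by
    have near (w : ℝ) (hw : w ∈ Set.uIcc z (z + a)) : |f'' w| ≤ C := by
      have dist_z := Set.abs_sub_left_of_mem_uIcc hz
      have dist_z' := Set.abs_sub_right_of_mem_uIcc hz
      have dist_w := Set.abs_sub_left_of_mem_uIcc hw
      have dist_w' := Set.abs_sub_right_of_mem_uIcc hw
      rw [add_sub_cancel_left] at dist_z dist_z' dist_w dist_w'
      apply bound
      · calc |w - x| = |(w - z) + (z - x)| := by ring_nf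
          _ ≤ _ := (abs_add_le _ _).trans (add_le_add dist_w dist_z)
      · calc |w - (x + a + b)| = |(z + a - w) + (x + b - z)| := by rw [abs_sub_comm]; ring_nf
          _ ≤ _ := (abs_add_le _ _).trans (add_le_add dist_w' dist_z')
    simpa only [add_sub_cancel_left] using abs_image_sub_le_of_hasDerivAt hf' near
  have translate_sub (z : ℝ) :
      HasDerivAt (fun y => f (y + a) - f y) (f' (z + a) - f' z) z :=
    ((hf (z + a)).comp_add_const z a).sub (hf z)
  calc |f (x + a + b) + f x - f (x + a) - f (x + b)|
      = |f (x + b + a) - f (x + b) - (f (x + a) - f x)| := by ring_nf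
    _ ≤ C * |a| * |x + b - x| := abs_image_sub_le_of_hasDerivAt translate_sub first_difference
    _ = C * |a| * |b| := by rw [add_sub_cancel_left]

/-! ### Symbols -/

/-- A symbol `a k m j` of a quadratic form, in which the output frequency `k` is reached from the
input frequency `j` through the intermediate frequency `m`, is controlled with constant `C` by the
`q`-weights of the two jumps and the half `p`-weights of the two ends. -/
def QuadSymbolBound (C q p : ℝ) (a : ℝ → ℝ → ℝ → ℝ) : Prop :=
  ∀ k m j, |a k m j| ≤
    C * (weight q (k - m) * weight q (m - j) * (weight (p / 2) k * weight (p / 2) j))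

/-- The analogue of `QuadSymbolBound` for a symbol `a k j` with a single frequency jump. -/
def BilinSymbolBound (C q p : ℝ) (a : ℝ → ℝ → ℝ) : Prop :=
  ∀ k j, |a k j| ≤ C * (weight q (k - j) * (weight (p / 2) k * weight (p / 2) j))

/-- The symbol of `v ↦ (𝓛²_ξ v, v)_{H^r}`. -/
def lie2Symbol (r : ℝ) (k m _j : ℝ) : ℝ := -(oddWeight r k * m)

/-- The symbol of `v ↦ ‖𝓛_ξ v‖²_{H^r}`. -/
def lieSymbol (r : ℝ) (_k m _j : ℝ) : ℝ := oddWeight r m * m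

/-- The sum of a symbol over the group generated by the two symmetries of the quadratic form:
exchanging the ends `k`, `j`, and reflecting `m` to `k + j - m`. -/
def symmetrize (a : ℝ → ℝ → ℝ → ℝ) (k m j : ℝ) : ℝ :=
  a k m j + a j m k + a k (k + j - m) j + a j (k + j - m) k

lemma weight_mul_abs_mul_abs_le {r x y z₁ z₂ z₃ a b : ℝ} (hr : 0 ≤ r)
    (h₁ : |z₁ - x| ≤ |a| + |b| ∧ |z₁ - y| ≤ |a| + |b|)
    (h₂ : |z₂ - x| ≤ |a| + |b| ∧ |z₂ - y| ≤ |a| + |b|)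
    (h₃ : |z₃ - x| ≤ |a| + |b| ∧ |z₃ - y| ≤ |a| + |b|) :
    weight r z₁ * |z₂| * |z₃| ≤ 4 ^ (r + 1) * (weight (r + 1) a * weight (r + 1) b *
      (weight ((r + 1) / 2) x * weight ((r + 1) / 2) y)) := by
  have exponent_split (c t : ℝ) :
      weight (c * (r + 1)) t = weight (c * r) t * weight (c / 2) t * weight (c / 2) t := by
    rw [← weight_exponent_add, ← weight_exponent_add]
    ring_nf
  have split_one (t : ℝ) : weight (r + 1) t = weight r t * weight (1 / 2) t * weight (1 / 2) t := by
    simpa only [one_mul] using exponent_split 1 t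
  have split_half (t : ℝ) : weight ((r + 1) / 2) t =
      weight (r / 2) t * weight (1 / 2 / 2) t * weight (1 / 2 / 2) t := by
    convert exponent_split (1 / 2) t using 2 <;> ring_nf
  have four_split : (4 : ℝ) ^ (r + 1) = 4 ^ r * 4 ^ (1 / 2 : ℝ) * 4 ^ (1 / 2 : ℝ) := by
    rw [← Real.rpow_add (by norm_num), ← Real.rpow_add (by norm_num)]
    ring_nf
  have bound₁ := weight_le_of_abs_sub_le hr h₁.1 h₁.2
  have bound₂ := (abs_le_weight_half z₂).trans
    (weight_le_of_abs_sub_le (by norm_num) h₂.1 h₂.2)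
  have bound₃ := (abs_le_weight_half z₃).trans
    (weight_le_of_abs_sub_le (by norm_num) h₃.1 h₃.2)
  have rhs₁ := (weight_nonneg _ _).trans bound₁
  have rhs₂ := (abs_nonneg _).trans bound₂
  refine (mul_le_mul (mul_le_mul bound₁ bound₂ (abs_nonneg _) rhs₁) bound₃ (abs_nonneg _)
    (mul_nonneg rhs₁ rhs₂)).trans_eq ?_
  rw [split_one, split_one, split_half, split_half, four_split]
  ring

lemma abs_sub_le_abs_add_abs_sub (k m j : ℝ) :
    (|k - j| ≤ |k - m| + |m - j| ∧ |k - k| ≤ |k - m| + |m - j|) ∧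
    (|m - j| ≤ |k - m| + |m - j| ∧ |m - k| ≤ |k - m| + |m - j|) := by
  refine ⟨⟨abs_sub_le k m j, ?_⟩, le_add_of_nonneg_left (abs_nonneg _), ?_⟩
  · rw [sub_self, abs_zero]
    positivity
  · rw [abs_sub_comm]
    exact le_add_of_nonneg_right (abs_nonneg _)

lemma quadSymbolBound_lie2Symbol {r : ℝ} (hr : 0 ≤ r) :
    QuadSymbolBound (4 ^ (r + 1)) (r + 1) (r + 1) (lie2Symbol r) := by
  intro k m j
  obtain ⟨near_k, near_m⟩ := abs_sub_le_abs_add_abs_sub k m j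
  have bound := weight_mul_abs_mul_abs_le hr near_k near_k near_m
  rw [mul_comm (weight ((r + 1) / 2) k)]
  rwa [lie2Symbol, abs_neg, abs_mul, oddWeight, abs_mul, abs_of_nonneg (weight_nonneg r k),
    mul_comm |k|]

lemma quadSymbolBound_lieSymbol {r : ℝ} (hr : 0 ≤ r) :
    QuadSymbolBound (4 ^ (r + 1)) (r + 1) (r + 1) (lieSymbol r) := by
  intro k m j
  obtain ⟨_, near_m⟩ := abs_sub_le_abs_add_abs_sub k m j
  have bound := weight_mul_abs_mul_abs_le hr near_m near_m near_m
  rw [mul_comm (weight ((r + 1) / 2) k)]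
  rwa [lieSymbol, abs_mul, oddWeight, abs_mul, abs_of_nonneg (weight_nonneg r m), mul_comm |m|]

/-- The left side is the second derivative of `x * oddWeight r x = (1+x²)^(r+1) - (1+x²)^r`. -/
lemma abs_second_deriv_mul_oddWeight_le {r : ℝ} (hr : 0 ≤ r) (x : ℝ) :
    |2 * (r + 1) * (weight r x + 2 * r * (x ^ 2 * weight (r - 1) x)) -
      2 * r * (weight (r - 1) x + 2 * (r - 1) * (x ^ 2 * weight (r - 1 - 1) x))| ≤
      8 * (r + 1) ^ 2 * weight r x := by
  have bound_r := abs_deriv_oddWeight_le r x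
  have bound_r' := abs_deriv_oddWeight_le (r - 1) x
  have abs_le : |r - 1| ≤ r + 1 := abs_le.mpr ⟨by linarith, by linarith⟩
  have weight_le : weight (r - 1) x ≤ weight r x := weight_exponent_mono (by linarith) x
  have nonneg := weight_nonneg r x
  rw [abs_of_nonneg hr] at bound_r
  set A := weight r x + 2 * r * (x ^ 2 * weight (r - 1) x)
  set B := weight (r - 1) x + 2 * (r - 1) * (x ^ 2 * weight (r - 1 - 1) x)
  have B_le : |B| ≤ (1 + 2 * (r + 1)) * weight r x :=
    bound_r'.trans (mul_le_mul (by linarith) weight_le (weight_nonneg _ _) (by positivity))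
  calc |2 * (r + 1) * A - 2 * r * B| ≤ |2 * (r + 1) * A| + |2 * r * B| := abs_sub _ _
    _ = 2 * (r + 1) * |A| + 2 * r * |B| := by
        rw [abs_mul, abs_mul (2 * r), abs_of_nonneg (by positivity : 0 ≤ 2 * (r + 1)),
          abs_of_nonneg (by positivity : 0 ≤ 2 * r)]
    _ ≤ 2 * (r + 1) * ((1 + 2 * r) * weight r x) +
          2 * r * ((1 + 2 * (r + 1)) * weight r x) := by gcongr
    _ = (8 * r ^ 2 + 12 * r + 2) * weight r x := by ring
    _ ≤ 8 * (r + 1) ^ 2 * weight r x := by gcongr; nlinarith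

lemma abs_second_difference_mul_oddWeight_le {r x a b Q : ℝ} (hr : 0 ≤ r)
    (bound : ∀ z, |z - x| ≤ |a| + |b| → |z - (x + a + b)| ≤ |a| + |b| → weight r z ≤ Q) :
    |(x + a + b) * oddWeight r (x + a + b) + x * oddWeight r x - (x + a) * oddWeight r (x + a) -
      (x + b) * oddWeight r (x + b)| ≤ 8 * (r + 1) ^ 2 * Q * |a| * |b| := by
  have mul_oddWeight (x : ℝ) : x * oddWeight r x = weight (r + 1) x - weight r x := by
    rw [← sq_mul_weight, oddWeight]
    ring
  have hasDeriv (z : ℝ) : HasDerivAt (fun x => weight (r + 1) x - weight r x)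
      (2 * (r + 1) * oddWeight r z - 2 * r * oddWeight (r - 1) z) z := by
    refine ((hasDerivAt_weight (r + 1) z).sub (hasDerivAt_weight r z)).congr_deriv ?_
    rw [add_sub_cancel_right, oddWeight, oddWeight]
  have hasDeriv' (z : ℝ) := ((hasDerivAt_oddWeight r z).const_mul (2 * (r + 1))).sub
    ((hasDerivAt_oddWeight (r - 1) z).const_mul (2 * r))
  simp only [mul_oddWeight]
  refine abs_second_difference_le hasDeriv hasDeriv' fun z hx hy => ?_
  exact (abs_second_deriv_mul_oddWeight_le hr z).trans (by gcongr; exact bound z hx hy)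

lemma abs_oddWeight_sub_le {r x y Q : ℝ} (hr : 0 ≤ r)
    (bound : ∀ z, |z - x| ≤ |y - x| → |z - y| ≤ |y - x| → weight r z ≤ Q) :
    |oddWeight r y - oddWeight r x| ≤ (1 + 2 * r) * Q * |y - x| := by
  refine abs_image_sub_le_of_hasDerivAt (hasDerivAt_oddWeight r) fun z hz => ?_
  have deriv_le := abs_deriv_oddWeight_le r z
  rw [abs_of_nonneg hr] at deriv_le
  have weight_le : weight r z ≤ Q := by
    refine bound z (Set.abs_sub_left_of_mem_uIcc hz) ?_
    rw [abs_sub_comm]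
    exact Set.abs_sub_right_of_mem_uIcc hz
  exact deriv_le.trans (by gcongr)

lemma symmetrize_lie2Symbol_add_lieSymbol (r x a b : ℝ) :
    symmetrize (lie2Symbol r + lieSymbol r) (x + a + b) (x + b) x =
      (a + b) * (oddWeight r (x + a + b) - oddWeight r x) -
      2 * ((x + a + b) * oddWeight r (x + a + b) + x * oddWeight r x -
        (x + a) * oddWeight r (x + a) - (x + b) * oddWeight r (x + b)) := by
  simp only [symmetrize, lie2Symbol, lieSymbol, Pi.add_apply,
    show x + a + b + x - (x + b) = x + a by ring]
  ring

lemma abs_symmetrize_lie2Symbol_add_lieSymbol_le {r x a b Q : ℝ} (hr : 0 ≤ r)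
    (bound : ∀ z, |z - x| ≤ |a| + |b| → |z - (x + a + b)| ≤ |a| + |b| → weight r z ≤ Q) :
    |symmetrize (lie2Symbol r + lieSymbol r) (x + a + b) (x + b) x| ≤
      8 * (r + 1) ^ 2 * (Q * ((1 + a ^ 2) * (1 + b ^ 2))) := by
  have Q_nonneg : 0 ≤ Q := by
    refine (weight_nonneg r (x + a)).trans (bound _ ?_ ?_)
    · rw [add_sub_cancel_left]
      exact le_add_of_nonneg_right (abs_nonneg b)
    · rw [show x + a - (x + a + b) = -b by ring, abs_neg]
      exact le_add_of_nonneg_left (abs_nonneg a)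
  have second := abs_second_difference_mul_oddWeight_le hr bound
  have abs_add : |x + a + b - x| ≤ |a| + |b| := by
    simpa only [add_assoc, add_sub_cancel_left] using abs_add_le a b
  have first := abs_oddWeight_sub_le hr fun z hz hz' =>
    bound z (hz.trans abs_add) (hz'.trans abs_add)
  rw [show x + a + b - x = a + b by ring] at first
  have abs_mul_le : |a| * |b| ≤ (1 + a ^ 2) * (1 + b ^ 2) / 4 := by
    have ha : 2 * |a| ≤ 1 + a ^ 2 := by nlinarith [sq_nonneg (1 - |a|), sq_abs a]
    have hb : 2 * |b| ≤ 1 + b ^ 2 := by nlinarith [sq_nonneg (1 - |b|), sq_abs b]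
    linarith [mul_le_mul ha hb (by positivity) (by positivity)]
  have add_sq_le : |a + b| ^ 2 ≤ 2 * ((1 + a ^ 2) * (1 + b ^ 2)) := by
    rw [sq_abs]
    nlinarith [sq_nonneg (a - b), mul_nonneg (sq_nonneg a) (sq_nonneg b)]
  rw [symmetrize_lie2Symbol_add_lieSymbol]
  refine (abs_sub _ _).trans ?_
  rw [abs_mul, abs_mul, abs_two]
  calc _ ≤ |a + b| * ((1 + 2 * r) * Q * |a + b|) + 2 * (8 * (r + 1) ^ 2 * Q * |a| * |b|) := by
        gcongr
    _ = (1 + 2 * r) * Q * |a + b| ^ 2 + 16 * (r + 1) ^ 2 * Q * (|a| * |b|) := by ring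
    _ ≤ (1 + 2 * r) * Q * (2 * ((1 + a ^ 2) * (1 + b ^ 2))) +
          16 * (r + 1) ^ 2 * Q * ((1 + a ^ 2) * (1 + b ^ 2) / 4) := by gcongr
    _ = (4 * (r + 1) ^ 2 + 2 * (1 + 2 * r)) * (Q * ((1 + a ^ 2) * (1 + b ^ 2))) := by ring
    _ ≤ 8 * (r + 1) ^ 2 * (Q * ((1 + a ^ 2) * (1 + b ^ 2))) := by gcongr; nlinarith

/-- Each of the two symbols has order `2r + 2`; their symmetrized sum is a second difference of a
function of order `2r + 2` plus a first difference of `oddWeight r`, hence of order `2r`. -/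
lemma quadSymbolBound_symmetrize {r : ℝ} (hr : 0 ≤ r) :
    QuadSymbolBound (8 * (r + 1) ^ 2 * 4 ^ r) (r + 1) r
      (symmetrize (lie2Symbol r + lieSymbol r)) := by
  intro k m j
  obtain ⟨b, rfl⟩ : ∃ b, m = j + b := ⟨m - j, by ring⟩
  obtain ⟨a, rfl⟩ : ∃ a, k = j + a + b := ⟨k - j - b, by ring⟩
  refine (abs_symmetrize_lie2Symbol_add_lieSymbol_le hr
    fun z hz hz' => weight_le_of_abs_sub_le hr hz hz').trans_eq ?_
  rw [show j + a + b - (j + b) = a by ring, add_sub_cancel_left, weight_exponent_add r 1 a,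
    weight_exponent_add r 1 b, weight_one, weight_one]
  ring

lemma abs_mul_weight_sub_le {r x y : ℝ} (hr : 0 ≤ r) (hxy : |x| ≤ |y|) :
    |x * weight r y - x * weight r x| ≤ 2 * r * weight r y * |y - x| := by
  have deriv_le (z : ℝ) (hz : z ∈ Set.uIcc |x| |y|) :
      |x * (2 * r * (z * weight (r - 1) z))| ≤ 2 * r * weight r y := by
    rw [Set.uIcc_of_le hxy] at hz
    have z_nonneg : 0 ≤ z := (abs_nonneg x).trans hz.1
    calc |x * (2 * r * (z * weight (r - 1) z))| = 2 * r * (|x| * z * weight (r - 1) z) := by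
          have := weight_nonneg (r - 1) z
          rw [abs_mul, abs_of_nonneg (by positivity : 0 ≤ 2 * r * (z * weight (r - 1) z))]
          ring
      _ ≤ 2 * r * (z * z * weight (r - 1) z) := by
          have := weight_nonneg (r - 1) z
          gcongr
          exact hz.1
      _ ≤ 2 * r * weight r z := by
          rw [← sq]
          gcongr
          exact sq_mul_weight_sub_one_le r z
      _ ≤ 2 * r * weight r y := by
          gcongr
          exact weight_le_of_abs_le hr (by rw [abs_of_nonneg z_nonneg]; exact hz.2)
  have mean_value := abs_image_sub_le_of_hasDerivAt
    (fun z => (hasDerivAt_weight r z).const_mul x) deriv_le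
  simp only [weight_abs] at mean_value
  exact mean_value.trans (mul_le_mul_of_nonneg_left (abs_abs_sub_abs_le y x)
    (mul_nonneg (by positivity) (weight_nonneg r y)))

lemma abs_mul_weight_sub_mul_weight_le {r x y : ℝ} (hr : 0 ≤ r) :
    |x * weight r y - y * weight r x| ≤ (2 * r + 1) * weight r (max |x| |y|) * |y - x| := by
  wlog hxy : |x| ≤ |y| generalizing x y
  · rw [abs_sub_comm, max_comm, abs_sub_comm y]
    exact this (le_of_not_ge hxy)
  rw [max_eq_right hxy, weight_abs]
  have weight_le : weight r x ≤ weight r y := weight_le_of_abs_le hr hxy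
  calc |x * weight r y - y * weight r x|
      = |(x * weight r y - x * weight r x) - (y - x) * weight r x| := by ring_nf
    _ ≤ |x * weight r y - x * weight r x| + |(y - x) * weight r x| := abs_sub _ _
    _ ≤ 2 * r * weight r y * |y - x| + |y - x| * weight r y := by
        rw [abs_mul _ (weight r x), abs_of_nonneg (weight_nonneg r x)]
        gcongr
        exact abs_mul_weight_sub_le hr hxy
    _ = _ := by ring

lemma weight_max_le {p : ℝ} (hp : 0 ≤ p) (x y : ℝ) : weight p (max |x| |y|) ≤
    2 ^ (p / 2) * (weight (p / 2) (x - y) * (weight (p / 2) x * weight (p / 2) y)) :=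
  weight_le_of_abs_le_max hp (abs_of_nonneg (le_max_of_le_left (abs_nonneg x))).le

lemma bilinSymbolBound_weight {r : ℝ} (hr : 0 ≤ r) :
    BilinSymbolBound (2 ^ (r / 2)) (r / 2) r (fun k _ => weight r k) := by
  intro k j
  rw [abs_of_nonneg (weight_nonneg r k)]
  exact weight_le_of_abs_le_max hr (le_max_left _ _)

lemma bilinSymbolBound_mul_weight {r : ℝ} (hr : 0 ≤ r) :
    BilinSymbolBound (2 ^ ((r + 1) / 2)) ((r + 1) / 2) (r + 1) (fun k j => j * weight r k) := by
  intro k j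
  set M := max |k| |j|
  have M_eq : |M| = M := abs_of_nonneg (le_max_of_le_left (abs_nonneg k))
  have j_le : |j| ≤ |M| := (le_max_right _ _).trans_eq M_eq.symm
  have weight_le : weight r k ≤ weight r M :=
    weight_le_of_abs_le hr ((le_max_left _ _).trans_eq M_eq.symm)
  calc |j * weight r k| = |j| * weight r k := by
        rw [abs_mul, abs_of_nonneg (weight_nonneg r k)]
    _ ≤ |M| * weight r M := mul_le_mul j_le weight_le (weight_nonneg _ _) (abs_nonneg _)
    _ ≤ weight (r + 1 / 2) M := abs_mul_weight_le _ _
    _ ≤ weight (r + 1) M := weight_exponent_mono (by linarith) _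
    _ ≤ _ := weight_max_le (by linarith) k j

lemma bilinSymbolBound_commutator {r : ℝ} (hr : 0 ≤ r) :
    BilinSymbolBound ((2 * r + 1) * 2 ^ (r / 2)) ((r + 1) / 2) r
      (fun k j => j * weight r k - k * weight r j) := by
  intro k j
  have weight_le := weight_max_le hr k j
  have abs_mul_le := abs_mul_weight_le (r / 2) (k - j)
  rw [← add_div] at abs_mul_le
  have := weight_nonneg (r / 2) k
  have := weight_nonneg (r / 2) j
  calc |j * weight r k - k * weight r j|
      ≤ (2 * r + 1) * weight r (max |k| |j|) * |k - j| := by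
        rw [max_comm]
        exact abs_mul_weight_sub_mul_weight_le hr
    _ ≤ (2 * r + 1) * (2 ^ (r / 2) * (weight (r / 2) (k - j) *
          (weight (r / 2) k * weight (r / 2) j))) * |k - j| := by gcongr
    _ = (2 * r + 1) * 2 ^ (r / 2) * (|k - j| * weight (r / 2) (k - j) *
          (weight (r / 2) k * weight (r / 2) j)) := by ring
    _ ≤ _ := by gcongr

/-! ### The Schur test -/

section Schur

lemma schur_test {ι E : Type*} [NormedAddCommGroup E] {F : ι → E} {K x y : ι → ℝ} {C M N : ℝ}
    (hC : 0 ≤ C) (hK : ∀ i, 0 ≤ K i) (bound : ∀ i, ‖F i‖ ≤ C * (K i * (x i * y i)))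
    (hx : HasSum (fun i => K i * x i ^ 2) M) (hy : HasSum (fun i => K i * y i ^ 2) N) :
    (Summable fun i => ‖F i‖) ∧ ∑' i, ‖F i‖ ≤ C * ((M + N) / 2) := by
  have majorant := ((hx.add hy).div_const 2).mul_left C
  have le_majorant (i : ι) : ‖F i‖ ≤ C * ((K i * x i ^ 2 + K i * y i ^ 2) / 2) := by
    refine (bound i).trans (mul_le_mul_of_nonneg_left ?_ hC)
    nlinarith [mul_nonneg (hK i) (sq_nonneg (x i - y i))]
  have summable : Summable fun i => ‖F i‖ :=
    majorant.summable.of_nonneg_of_le (fun i => norm_nonneg _) le_majorant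
  exact ⟨summable, (summable.tsum_le_tsum le_majorant majorant.summable).trans_eq majorant.tsum_eq⟩

lemma hasSum_shear {G ι : Type*} [AddGroup G] {K : G → ℝ} {Z : ι → ℝ} {S N : ℝ} (π : ι → G)
    (hK : HasSum K S) (hZ : HasSum Z N) (hK₀ : ∀ g, 0 ≤ K g) (hZ₀ : ∀ i, 0 ≤ Z i) :
    HasSum (fun p : G × ι => K (p.1 - π p.2) * Z p.2) (S * N) := by
  let shear : G × ι ≃ ι × G :=
    (Equiv.prodComm G ι).trans (Equiv.prodShear (Equiv.refl ι) fun i => Equiv.subRight (π i))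
  have product : HasSum (fun p : ι × G => K p.2 * Z p.1) (S * N) := by
    simpa only [mul_comm] using
      hZ.mul hK (hZ.summable.mul_of_nonneg hK.summable hZ₀ hK₀)
  have sheared := shear.hasSum_iff.mpr product
  exact sheared

variable {G E : Type*} [AddGroup G] [NormedAddCommGroup E] {K x y : G → ℝ} {C S M N : ℝ}

lemma hasSum_comp_neg (hK : HasSum K S) : HasSum (fun g => K (-g)) S :=
  (Equiv.neg G).hasSum_iff.mpr hK

lemma schur_test_convolution {F : G × G → E} (hC : 0 ≤ C) (hK₀ : ∀ g, 0 ≤ K g) (hK : HasSum K S)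
    (hx : HasSum (fun g => x g ^ 2) M) (hy : HasSum (fun g => y g ^ 2) N)
    (bound : ∀ p, ‖F p‖ ≤ C * (K (p.1 - p.2) * (x p.1 * y p.2))) :
    (Summable fun p => ‖F p‖) ∧ ∑' p, ‖F p‖ ≤ C * (S * ((M + N) / 2)) := by
  have sum_right {K z : G → ℝ} {S N : ℝ} (hK₀ : ∀ g, 0 ≤ K g) (hK : HasSum K S)
      (hz : HasSum (fun g => z g ^ 2) N) :
      HasSum (fun p : G × G => K (p.1 - p.2) * z p.2 ^ 2) (S * N) :=
    hasSum_shear (Z := fun g => z g ^ 2) id hK hz hK₀ fun _ => sq_nonneg _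
  have sum_left : HasSum (fun p : G × G => K (p.1 - p.2) * x p.1 ^ 2) (S * M) := by
    have reflected := sum_right (K := fun g => K (-g)) (fun _ => hK₀ _) (hasSum_comp_neg hK) hx
    simp only [neg_sub] at reflected
    have swapped := (Equiv.prodComm G G).hasSum_iff.mpr reflected
    exact swapped
  rw [show S * ((M + N) / 2) = (S * M + S * N) / 2 by ring]
  exact schur_test hC (fun _ => hK₀ _) bound sum_left (sum_right hK₀ hK hy)

/-- The permutation `(k, m, j) ↦ (j, m, k)`, which reads a path of frequencies backwards. -/
def reversePath (G : Type*) : Equiv.Perm (G × G × G) :=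
  Function.Involutive.toPerm (fun p => (p.2.2, p.2.1, p.1)) fun _ => rfl

lemma reversePath_apply {G : Type*} (p : G × G × G) : reversePath G p = (p.2.2, p.2.1, p.1) := rfl

lemma schur_test_double_convolution {F : G × G × G → E} (hC : 0 ≤ C) (hK₀ : ∀ g, 0 ≤ K g)
    (hK : HasSum K S) (hx : HasSum (fun g => x g ^ 2) M)
    (bound : ∀ p, ‖F p‖ ≤ C * (K (p.1 - p.2.1) * K (p.2.1 - p.2.2) * (x p.1 * x p.2.2))) :
    (Summable fun p => ‖F p‖) ∧ ∑' p, ‖F p‖ ≤ C * (S ^ 2 * M) := by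
  have sum_last {K : G → ℝ} (hK₀ : ∀ g, 0 ≤ K g) (hK : HasSum K S) : HasSum
      (fun p : G × G × G => K (p.1 - p.2.1) * (K (p.2.1 - p.2.2) * x p.2.2 ^ 2)) (S * (S * M)) :=
    hasSum_shear (Z := fun p : G × G => K (p.1 - p.2) * x p.2 ^ 2) Prod.fst hK
      (hasSum_shear (Z := fun g => x g ^ 2) id hK hx hK₀ fun _ => sq_nonneg _) hK₀
      fun _ => mul_nonneg (hK₀ _) (sq_nonneg _)
  have sum_first : HasSum
      (fun p : G × G × G => K (p.2.1 - p.2.2) * (K (p.1 - p.2.1) * x p.1 ^ 2)) (S * (S * M)) := by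
    have reflected := sum_last (K := fun g => K (-g)) (fun _ => hK₀ _) (hasSum_comp_neg hK)
    simp only [neg_sub] at reflected
    have swapped := (reversePath G).hasSum_iff.mpr reflected
    exact swapped
  rw [show S ^ 2 * M = (S * (S * M) + S * (S * M)) / 2 by ring]
  refine schur_test hC (fun p => mul_nonneg (hK₀ (p.1 - p.2.1)) (hK₀ (p.2.1 - p.2.2))) bound ?_ ?_
  · simpa only [mul_left_comm, mul_assoc] using sum_first
  · simpa only [mul_assoc] using sum_last hK₀ hK

end Schur

/-! ### Absolutely summable Fourier coefficients -/

/-- The coefficients of `c`, multiplied by the weight `(1+k²)^p`, are absolutely summable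
(a weighted Wiener algebra). -/
def MemWiener (p : ℝ) (c : FC) : Prop := Summable fun k : ℤ => weight p k * ‖c k‖

/-- The weighted Wiener norm `Σ_k (1+k²)^p |ĉ(k)|`. -/
def wienerNorm (p : ℝ) (c : FC) : ℝ := ∑' k : ℤ, weight p k * ‖c k‖

/-- The constant `(Σ_k (1+k²)⁻¹)^(1/2)` of the embedding of `H^(2p+1)` into `MemWiener p`. -/
def sobolevConst : ℝ := √(∑' k : ℤ, weight (-1) k)

lemma sobolevConst_nonneg : 0 ≤ sobolevConst := Real.sqrt_nonneg _

lemma wienerNorm_nonneg (p : ℝ) (c : FC) : 0 ≤ wienerNorm p c :=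
  tsum_nonneg fun _ => mul_nonneg (weight_nonneg _ _) (norm_nonneg _)

lemma MemWiener.of_norm_le {p q : ℝ} {c d : FC} (hc : MemWiener q c)
    (h : ∀ k : ℤ, weight p k * ‖d k‖ ≤ weight q k * ‖c k‖) : MemWiener p d :=
  hc.of_nonneg_of_le (fun _ => mul_nonneg (weight_nonneg _ _) (norm_nonneg _)) h

lemma MemWiener.wienerNorm_le {p q : ℝ} {c d : FC} (hc : MemWiener q c)
    (h : ∀ k : ℤ, weight p k * ‖d k‖ ≤ weight q k * ‖c k‖) : wienerNorm p d ≤ wienerNorm q c :=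
  (hc.of_norm_le h).tsum_le_tsum h hc

lemma MemWiener.mono {p q : ℝ} {c : FC} (hc : MemWiener q c) (hpq : p ≤ q) : MemWiener p c :=
  hc.of_norm_le fun k => mul_le_mul_of_nonneg_right (weight_exponent_mono hpq k) (norm_nonneg _)

lemma MemWiener.wienerNorm_mono {p q : ℝ} {c : FC} (hc : MemWiener q c) (hpq : p ≤ q) :
    wienerNorm p c ≤ wienerNorm q c :=
  hc.wienerNorm_le fun k => mul_le_mul_of_nonneg_right (weight_exponent_mono hpq k) (norm_nonneg _)

lemma norm_D1 (c : FC) (k : ℤ) : ‖D1 c k‖ = |(k : ℝ)| * ‖c k‖ := by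
  simp [D1]

lemma norm_hilbert_le (c : FC) (k : ℤ) : ‖hilbert c k‖ ≤ ‖c k‖ := by
  have sign_le : ‖(Int.sign k : ℂ)‖ ≤ 1 := by
    rcases Int.sign_trichotomy k with h | h | h <;> simp [h]
  simpa [hilbert] using mul_le_mul_of_nonneg_right sign_le (norm_nonneg (c k))

lemma weight_mul_norm_D1_le (p : ℝ) (c : FC) (k : ℤ) :
    weight p k * ‖D1 c k‖ ≤ weight (p + 1 / 2) k * ‖c k‖ := by
  rw [norm_D1, ← mul_assoc, mul_comm (weight p k)]
  exact mul_le_mul_of_nonneg_right (abs_mul_weight_le p k) (norm_nonneg _)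

lemma weight_mul_norm_hilbert_le (p : ℝ) (c : FC) (k : ℤ) :
    weight p k * ‖hilbert c k‖ ≤ weight p k * ‖c k‖ :=
  mul_le_mul_of_nonneg_left (norm_hilbert_le c k) (weight_nonneg p k)

lemma MemWiener.D1 {p : ℝ} {c : FC} (hc : MemWiener (p + 1 / 2) c) : MemWiener p (D1 c) :=
  hc.of_norm_le (weight_mul_norm_D1_le p c)

lemma MemWiener.wienerNorm_D1_le {p : ℝ} {c : FC} (hc : MemWiener (p + 1 / 2) c) :
    wienerNorm p (FC.D1 c) ≤ wienerNorm (p + 1 / 2) c :=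
  hc.wienerNorm_le (weight_mul_norm_D1_le p c)

lemma MemWiener.hilbert {p : ℝ} {c : FC} (hc : MemWiener p c) : MemWiener p (hilbert c) :=
  hc.of_norm_le (weight_mul_norm_hilbert_le p c)

lemma MemWiener.wienerNorm_hilbert_le {p : ℝ} {c : FC} (hc : MemWiener p c) :
    wienerNorm p (FC.hilbert c) ≤ wienerNorm p c :=
  hc.wienerNorm_le (weight_mul_norm_hilbert_le p c)

/-! ### Sobolev spaces -/

lemma hsNorm_nonneg (p : ℝ) (c : FC) : 0 ≤ hsNorm p c := Real.sqrt_nonneg _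

lemma hsNorm_sq (p : ℝ) (c : FC) : hsNorm p c ^ 2 = ∑' k : ℤ, wt p k * ‖c k‖ ^ 2 :=
  Real.sq_sqrt (tsum_nonneg fun _ => mul_nonneg (weight_nonneg _ _) (sq_nonneg _))

lemma memHs.hasSum {p : ℝ} {c : FC} (hc : memHs p c) :
    HasSum (fun k : ℤ => (weight (p / 2) k * ‖c k‖) ^ 2) (hsNorm p c ^ 2) := by
  simp only [mul_pow, weight_half_sq]
  rw [hsNorm_sq]
  exact Summable.hasSum hc

lemma memHs.of_norm_le {p q : ℝ} {c d : FC} (hc : memHs q c)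
    (h : ∀ k : ℤ, wt p k * ‖d k‖ ^ 2 ≤ wt q k * ‖c k‖ ^ 2) : memHs p d :=
  Summable.of_nonneg_of_le (fun _ => mul_nonneg (weight_nonneg _ _) (sq_nonneg _)) h hc

lemma memHs.hsNorm_le {p q : ℝ} {c d : FC} (hc : memHs q c)
    (h : ∀ k : ℤ, wt p k * ‖d k‖ ^ 2 ≤ wt q k * ‖c k‖ ^ 2) : hsNorm p d ≤ hsNorm q c :=
  Real.sqrt_le_sqrt ((hc.of_norm_le h).tsum_le_tsum h hc)

lemma memHs.mono {p q : ℝ} {c : FC} (hc : memHs q c) (hpq : p ≤ q) : memHs p c :=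
  hc.of_norm_le fun k => mul_le_mul_of_nonneg_right (weight_exponent_mono hpq k) (sq_nonneg _)

lemma wt_mul_norm_hilbert_sq_le (p : ℝ) (c : FC) (k : ℤ) :
    wt p k * ‖hilbert c k‖ ^ 2 ≤ wt p k * ‖c k‖ ^ 2 :=
  mul_le_mul_of_nonneg_left (pow_le_pow_left₀ (norm_nonneg _) (norm_hilbert_le c k) 2)
    (weight_nonneg p k)

lemma memHs.hilbert {p : ℝ} {c : FC} (hc : memHs p c) : memHs p (hilbert c) :=
  hc.of_norm_le (wt_mul_norm_hilbert_sq_le p c)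

lemma memHs.hsNorm_hilbert_le {p : ℝ} {c : FC} (hc : memHs p c) :
    hsNorm p (FC.hilbert c) ≤ hsNorm p c :=
  hc.hsNorm_le (wt_mul_norm_hilbert_sq_le p c)

lemma memHs.sub {p : ℝ} {c d : FC} (hc : memHs p c) (hd : memHs p d) : memHs p (c - d) := by
  refine Summable.of_nonneg_of_le (fun _ => mul_nonneg (weight_nonneg _ _) (sq_nonneg _))
    (fun k => ?_) ((Summable.add hc hd).mul_left 2)
  have norm_sq_le : ‖(c - d) k‖ ^ 2 ≤ 2 * (‖c k‖ ^ 2 + ‖d k‖ ^ 2) := by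
    have := pow_le_pow_left₀ (norm_nonneg _) (norm_sub_le (c k) (d k)) 2
    rw [Pi.sub_apply]
    linarith [add_sq_le (a := ‖c k‖) (b := ‖d k‖)]
  have := mul_le_mul_of_nonneg_left norm_sq_le (weight_nonneg p k)
  simp only [wt, weight] at *
  linarith

lemma summable_weight_neg_one : Summable fun k : ℤ => weight (-1) (k : ℝ) := by
  have inv_sq : Summable fun k : ℤ => 1 / (k : ℝ) ^ 2 :=
    Real.summable_one_div_int_pow.mpr (by norm_num)
  refine inv_sq.of_norm_bounded_eventually ?_
  filter_upwards [(Set.finite_singleton (0 : ℤ)).compl_mem_cofinite] with k hk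
  have sq_pos : (0 : ℝ) < (k : ℝ) ^ 2 := by
    have : k ≠ 0 := hk
    positivity
  rw [Real.norm_of_nonneg (weight_nonneg _ _), weight, Real.rpow_neg_one, one_div]
  exact inv_anti₀ sq_pos (by linarith)

/-- Cauchy–Schwarz against the square-summable weights `(1+k²)^(-1/2)`. -/
lemma memHs.memWiener_and_wienerNorm_le {p : ℝ} {c : FC} (hc : memHs (2 * p + 1) c) :
    MemWiener p c ∧ wienerNorm p c ≤ sobolevConst * hsNorm (2 * p + 1) c := by
  have split (k : ℤ) : weight (-1 / 2) (k : ℝ) * (weight ((2 * p + 1) / 2) k * ‖c k‖) =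
      weight p k * ‖c k‖ := by
    rw [← mul_assoc, ← weight_exponent_add]
    ring_nf
  have weight_sq (k : ℤ) : weight (-1 / 2) (k : ℝ) ^ (2 : ℝ) = weight (-1) k := by
    rw [Real.rpow_two, weight_half_sq]
  have coeff_sq (k : ℤ) : (weight ((2 * p + 1) / 2) (k : ℝ) * ‖c k‖) ^ (2 : ℝ) =
      wt (2 * p + 1) k * ‖c k‖ ^ 2 := by
    rw [Real.rpow_two, mul_pow, weight_half_sq]
    rfl
  have cauchy_schwarz := Real.summable_and_inner_le_Lp_mul_Lq_tsum_of_nonneg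
    Real.HolderConjugate.two_two (fun k : ℤ => weight_nonneg (-1 / 2) k)
    (fun k : ℤ => mul_nonneg (weight_nonneg ((2 * p + 1) / 2) k) (norm_nonneg (c k)))
    (by simpa only [weight_sq] using summable_weight_neg_one)
    (by simpa only [coeff_sq, memHs] using hc)
  simp only [split, weight_sq, coeff_sq, ← Real.sqrt_eq_rpow] at cauchy_schwarz
  exact cauchy_schwarz

/-! ### Products and Lie derivatives -/

/-- The coefficients of `d` grow at most like `A (1+k²)^p`. -/
def PolyBound (A p : ℝ) (d : FC) : Prop := ∀ k : ℤ, ‖d k‖ ≤ A * weight p k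

lemma PolyBound.const_nonneg {A p : ℝ} {d : FC} (hd : PolyBound A p d) : 0 ≤ A :=
  nonneg_of_mul_nonneg_left ((norm_nonneg _).trans (hd 0)) (weight_pos _ _)

lemma PolyBound.D1 {A p : ℝ} {d : FC} (hd : PolyBound A p d) :
    PolyBound A (p + 1 / 2) (D1 d) := fun k =>
  calc ‖FC.D1 d k‖ ≤ |(k : ℝ)| * (A * weight p k) := by
        rw [norm_D1]
        exact mul_le_mul_of_nonneg_left (hd k) (abs_nonneg _)
    _ = A * (|(k : ℝ)| * weight p k) := by ring
    _ ≤ A * weight (p + 1 / 2) k :=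
        mul_le_mul_of_nonneg_left (abs_mul_weight_le p k) hd.const_nonneg

lemma memHs.polyBound {c : FC} (hc : memHs 0 c) : PolyBound (hsNorm 0 c) 0 c := by
  intro k
  have coeff_le := Summable.le_tsum hc k fun _ _ => mul_nonneg (weight_nonneg _ _) (sq_nonneg _)
  simp only [weight, Real.rpow_zero, mul_one]
  exact Real.le_sqrt_of_sq_le (by simpa only [wt, Real.rpow_zero, one_mul] using coeff_le)

lemma mul_apply_eq_tsum_sub (c d : FC) (k : ℤ) : mul c d k = ∑' j : ℤ, c (k - j) * d j := by
  rw [mul, ← (Equiv.subLeft k).tsum_eq]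
  simp only [Equiv.subLeft_apply, sub_sub_cancel]

section Product

variable {A B p : ℝ} {c c' d d' : FC}

lemma PolyBound.norm_mul_le (hp : 0 ≤ p) (hd : PolyBound A p d) (c : FC) (k j : ℤ) :
    ‖c j * d (k - j)‖ ≤ 2 ^ p * A * weight p k * (weight p j * ‖c j‖) := by
  have peetre : weight p ((k - j : ℤ) : ℝ) ≤ 2 ^ p * (weight p k * weight p j) := by
    rw [Int.cast_sub, sub_eq_add_neg]
    simpa only [weight_neg] using weight_add_le hp (k : ℝ) (-j)
  calc ‖c j * d (k - j)‖ ≤ ‖c j‖ * (A * (2 ^ p * (weight p k * weight p j))) := by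
        rw [norm_mul]
        have := hd.const_nonneg
        exact mul_le_mul_of_nonneg_left ((hd _).trans (by gcongr)) (norm_nonneg _)
    _ = _ := by ring

lemma MemWiener.summable_mul (hp : 0 ≤ p) (hc : MemWiener p c) (hd : PolyBound A p d) (k : ℤ) :
    Summable fun j : ℤ => c j * d (k - j) :=
  Summable.of_norm_bounded (hc.mul_left _) (hd.norm_mul_le hp c k)

lemma MemWiener.polyBound_mul (hp : 0 ≤ p) (hc : MemWiener p c) (hd : PolyBound A p d) :
    PolyBound (2 ^ p * A * wienerNorm p c) p (mul c d) := fun k =>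
  (tsum_of_norm_bounded (hc.hasSum.mul_left _) (hd.norm_mul_le hp c k)).trans_eq
    (by rw [wienerNorm]; ring)

protected lemma mul_sub (hp : 0 ≤ p) (hc : MemWiener p c) (hd : PolyBound A p d)
    (hd' : PolyBound B p d') : mul c (d - d') = mul c d - mul c d' := by
  funext k
  simp only [mul, Pi.sub_apply, _root_.mul_sub]
  exact (hc.summable_mul hp hd k).tsum_sub (hc.summable_mul hp hd' k)

protected lemma sub_mul (hp : 0 ≤ p) (hc : MemWiener p c) (hc' : MemWiener p c')
    (hd : PolyBound A p d) : mul (c - c') d = mul c d - mul c' d := by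
  funext k
  simp only [mul, Pi.sub_apply, _root_.sub_mul]
  exact (hc.summable_mul hp hd k).tsum_sub (hc'.summable_mul hp hd k)

lemma D1_sub (c d : FC) : D1 (c - d) = D1 c - D1 d := by
  funext k
  simp only [D1, Pi.sub_apply, _root_.mul_sub]

lemma hilbert_sub (c d : FC) : hilbert (c - d) = hilbert c - hilbert d := by
  funext k
  simp only [hilbert, Pi.sub_apply, _root_.mul_sub]

lemma lie_eq_D1_mul (hp : 0 ≤ p) (hc : MemWiener (p + 1 / 2) c) (hd : PolyBound A p d) :
    lie c d = D1 (mul c d) := by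
  have hp' : 0 ≤ p + 1 / 2 := by positivity
  funext k
  change (∑' j, c j * D1 d (k - j)) + ∑' j, D1 c j * d (k - j) =
    Complex.I * k * ∑' j, c j * d (k - j)
  rw [← (hc.summable_mul hp' hd.D1 k).tsum_add (hc.D1.summable_mul hp hd k), ← tsum_mul_left]
  refine tsum_congr fun j => ?_
  simp only [D1, Int.cast_sub]
  ring

lemma PolyBound.lie (hp : 0 ≤ p) (hc : MemWiener (p + 1 / 2) c) (hd : PolyBound A p d) :
    PolyBound (2 ^ p * A * wienerNorm p c) (p + 1 / 2) (lie c d) := by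
  rw [lie_eq_D1_mul hp hc hd]
  exact ((hc.mono (by linarith)).polyBound_mul hp hd).D1

lemma lie_sub (hp : 0 ≤ p) (hc : MemWiener (p + 1 / 2) c) (hd : PolyBound A p d)
    (hd' : PolyBound B p d') : lie c (d - d') = lie c d - lie c d' := by
  have hp' : 0 ≤ p + 1 / 2 := by positivity
  rw [lie, lie, lie, D1_sub, FC.mul_sub hp' hc hd.D1 hd'.D1, FC.mul_sub hp hc.D1 hd hd']
  abel

lemma lie2_eq_D1_mul (hp : 0 ≤ p) (hc : MemWiener (p + 1) c) (hd : PolyBound A p d) :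
    lie2 c d = D1 (mul c (D1 (mul c d))) := by
  have hc' : MemWiener (p + 1 / 2) c := hc.mono (by linarith)
  rw [lie2, lie_eq_D1_mul (by positivity) (hc.mono (by linarith)) (hd.lie hp hc'),
    lie_eq_D1_mul hp hc' hd]

lemma PolyBound.lie2 (hp : 0 ≤ p) (hc : MemWiener (p + 1) c) (hd : PolyBound A p d) :
    PolyBound (2 ^ (p + 1 / 2) * (2 ^ p * A * wienerNorm p c) * wienerNorm (p + 1 / 2) c)
      (p + 1) (lie2 c d) := by
  have := (hd.lie hp (hc.mono (by linarith))).lie (by positivity) (hc.mono (by linarith))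
  rwa [add_assoc, add_halves] at this

lemma lie2_sub (hp : 0 ≤ p) (hc : MemWiener (p + 1) c) (hd : PolyBound A p d)
    (hd' : PolyBound B p d') : lie2 c (d - d') = lie2 c d - lie2 c d' := by
  have hc' : MemWiener (p + 1 / 2) c := hc.mono (by linarith)
  rw [lie2, lie2, lie2, lie_sub hp hc' hd hd',
    lie_sub (by positivity) (hc.mono (by linarith)) (hd.lie hp hc') (hd'.lie hp hc')]

end Product

/-! ### Quadratic and bilinear forms -/

/-- The summand of the `H^r` inner product `(c,d)_{H^r}`. -/
def innerTerm (r : ℝ) (c d : FC) (k : ℤ) : ℂ := wt r k * (c k * starRingEnd ℂ (d k))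

/-- The summand, over frequency paths `(k, m, j)`, of the form with symbol `a` that is quadratic in
both `ξ` and `v`. -/
def quadTerm (a : ℝ → ℝ → ℝ → ℝ) (ξ v : FC) (p : ℤ × ℤ × ℤ) : ℂ :=
  a p.1 p.2.1 p.2.2 *
    (ξ (p.1 - p.2.1) * ξ (p.2.1 - p.2.2) * (v p.2.2 * starRingEnd ℂ (v p.1)))

/-- The summand, over frequency pairs `(k, j)`, of the trilinear form with symbol `a`. -/
def bilinTerm (a : ℝ → ℝ → ℝ) (u v w : FC) (p : ℤ × ℤ) : ℂ :=
  a p.1 p.2 * (u (p.1 - p.2) * (v p.2 * starRingEnd ℂ (w p.1)))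

/-- The permutation `(k, m, j) ↦ (k, k + j - m, j)`, which exchanges the two jumps of a path. -/
def swapJumps : Equiv.Perm (ℤ × ℤ × ℤ) :=
  Function.Involutive.toPerm (fun p => (p.1, p.1 + p.2.2 - p.2.1, p.2.2)) fun p => by
    simp only [sub_sub_cancel]

lemma swapJumps_apply (p : ℤ × ℤ × ℤ) : swapJumps p = (p.1, p.1 + p.2.2 - p.2.1, p.2.2) := rfl

lemma summable_tsum_fiber {α β : Type*} {F : α × β → ℂ} {B : ℝ}
    (hF : (Summable fun p => ‖F p‖) ∧ ∑' p, ‖F p‖ ≤ B) :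
    (Summable fun a => ‖∑' b, F (a, b)‖) ∧ ∑' a, ‖∑' b, F (a, b)‖ ≤ B := by
  have norm_le (a : α) : ‖∑' b, F (a, b)‖ ≤ ∑' b, ‖F (a, b)‖ :=
    norm_tsum_le_tsum_norm (hF.1.prod_factor a)
  have summable := hF.1.prod.of_nonneg_of_le (fun _ => norm_nonneg _) norm_le
  refine ⟨summable, (summable.tsum_le_tsum norm_le hF.1.prod).trans ?_⟩
  rw [← hF.1.tsum_prod]
  exact hF.2

section Quadratic

variable {C q p : ℝ} {a b : ℝ → ℝ → ℝ → ℝ} {ξ v : FC} {z : ℂ}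

lemma QuadSymbolBound.quadTerm_bound (ha : QuadSymbolBound C q p a) (hξ : MemWiener q ξ)
    (hv : memHs p v) : (Summable fun i => ‖quadTerm a ξ v i‖) ∧
      ∑' i, ‖quadTerm a ξ v i‖ ≤ C * (wienerNorm q ξ ^ 2 * hsNorm p v ^ 2) := by
  have hC : 0 ≤ C := nonneg_of_mul_nonneg_left ((abs_nonneg _).trans (ha 0 0 0)) <|
    mul_pos (mul_pos (weight_pos _ _) (weight_pos _ _)) (mul_pos (weight_pos _ _) (weight_pos _ _))
  refine schur_test_double_convolution hC
    (fun k : ℤ => mul_nonneg (weight_nonneg q k) (norm_nonneg (ξ k))) hξ.hasSum hv.hasSum ?_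
  rintro ⟨k, m, j⟩
  simp only [quadTerm, norm_mul, RCLike.norm_conj, Complex.norm_real, Real.norm_eq_abs,
    Int.cast_sub]
  refine (mul_le_mul_of_nonneg_right (ha k m j) (by positivity)).trans_eq ?_
  ring

lemma hasSum_quadTerm_reverse (hξ : isReal ξ) (h : HasSum (quadTerm a ξ v) z) :
    HasSum (quadTerm (fun k m j => a j m k) ξ v) (starRingEnd ℂ z) := by
  have reversed := Complex.hasSum_conj'.mpr ((reversePath ℤ).hasSum_iff.mpr h)
  refine reversed.congr_fun fun p => ?_
  simp only [quadTerm, reversePath_apply, Function.comp_apply, map_mul,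
    Complex.conj_ofReal, Complex.conj_conj, ← hξ _, neg_sub]
  ring

lemma hasSum_quadTerm_swapJumps (h : HasSum (quadTerm a ξ v) z) :
    HasSum (quadTerm (fun k m j => a k (k + j - m) j) ξ v) z := by
  refine (swapJumps.hasSum_iff.mpr h).congr_fun fun p => ?_
  simp only [quadTerm, swapJumps_apply, Function.comp_apply,
    show p.1 - (p.1 + p.2.2 - p.2.1) = p.2.1 - p.2.2 by ring,
    show p.1 + p.2.2 - p.2.1 - p.2.2 = p.1 - p.2.1 by ring, Int.cast_sub, Int.cast_add]
  ring

lemma hasSum_quadTerm_add {z' : ℂ} (ha : HasSum (quadTerm a ξ v) z)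
    (hb : HasSum (quadTerm b ξ v) z') : HasSum (quadTerm (a + b) ξ v) (z + z') := by
  refine (ha.add hb).congr_fun fun p => ?_
  simp only [quadTerm, Pi.add_apply, Complex.ofReal_add, add_mul]

lemma hasSum_quadTerm_symmetrize (hξ : isReal ξ) (h : HasSum (quadTerm a ξ v) z) :
    HasSum (quadTerm (symmetrize a) ξ v) (4 * z.re : ℝ) := by
  have real_part := hasSum_quadTerm_add h (hasSum_quadTerm_reverse hξ h)
  convert hasSum_quadTerm_add real_part (hasSum_quadTerm_swapJumps real_part) using 1
  · congr 1
    funext k m j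
    simp only [symmetrize, Pi.add_apply]
    ring
  · rw [Complex.add_conj]
    push_cast
    ring

end Quadratic

section Bilinear

variable {C q p : ℝ} {a : ℝ → ℝ → ℝ} {u v w : FC} {z : ℂ}

lemma BilinSymbolBound.bilinTerm_bound (ha : BilinSymbolBound C q p a) (hu : MemWiener q u)
    (hv : memHs p v) (hw : memHs p w) : (Summable fun i => ‖bilinTerm a u v w i‖) ∧
      ∑' i, ‖bilinTerm a u v w i‖ ≤
        C * (wienerNorm q u * ((hsNorm p w ^ 2 + hsNorm p v ^ 2) / 2)) := by
  have hC : 0 ≤ C := nonneg_of_mul_nonneg_left ((abs_nonneg _).trans (ha 0 0)) <|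
    mul_pos (weight_pos _ _) (mul_pos (weight_pos _ _) (weight_pos _ _))
  refine schur_test_convolution hC
    (fun k : ℤ => mul_nonneg (weight_nonneg q k) (norm_nonneg (u k))) hu.hasSum hw.hasSum
    hv.hasSum ?_
  rintro ⟨k, j⟩
  simp only [bilinTerm, norm_mul, RCLike.norm_conj, Complex.norm_real, Real.norm_eq_abs,
    Int.cast_sub]
  refine (mul_le_mul_of_nonneg_right (ha k j) (by positivity)).trans_eq ?_
  ring

lemma hasSum_bilinTerm_antisymmetrize (hu : isReal u) (h : HasSum (bilinTerm a u v v) z) :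
    HasSum (bilinTerm (fun k j => a k j - a j k) u v v) (z - starRingEnd ℂ z) := by
  have reversed := Complex.hasSum_conj'.mpr ((Equiv.prodComm ℤ ℤ).hasSum_iff.mpr h)
  refine (h.sub reversed).congr_fun fun p => ?_
  simp only [bilinTerm, Function.comp_apply, Equiv.prodComm_apply, Prod.fst_swap, Prod.snd_swap,
    map_mul, Complex.conj_ofReal, Complex.conj_conj, ← hu _, neg_sub, Complex.ofReal_sub]
  ring

end Bilinear

/-! ### Energy estimates -/

section Noise

variable {r : ℝ} {ξ v : FC}

lemma innerTerm_lie2 (hr : 0 ≤ r) (hξ : MemWiener (r + 1) ξ) (hv : memHs (r + 1) v) (k : ℤ) :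
    innerTerm r (lie2 ξ v) v k = ∑' q : ℤ × ℤ, quadTerm (lie2Symbol r) ξ v (k, q) := by
  have summable := ((quadSymbolBound_lie2Symbol hr).quadTerm_bound hξ hv).1.of_norm
  have polyBound := (hv.mono (by linarith : 0 ≤ r + 1)).polyBound
  rw [(summable.prod_factor k).tsum_prod, innerTerm,
    lie2_eq_D1_mul le_rfl (hξ.mono (by linarith)) polyBound, D1, mul_apply_eq_tsum_sub,
    ← tsum_mul_left, ← tsum_mul_right, ← tsum_mul_left]
  refine tsum_congr fun m => ?_
  rw [D1, mul_apply_eq_tsum_sub]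
  simp only [← tsum_mul_left, ← tsum_mul_right]
  refine tsum_congr fun j => ?_
  rw [quadTerm, lie2Symbol, oddWeight, weight, wt]
  push_cast
  linear_combination (((1 + (k : ℝ) ^ 2) ^ r : ℝ) * k * ξ (k - m) * m * ξ (m - j) * v j *
    starRingEnd ℂ (v k) : ℂ) * Complex.I_mul_I

lemma innerTerm_lie2_bound (hr : 0 ≤ r) (hξ : MemWiener (r + 1) ξ) (hv : memHs (r + 1) v) :
    (Summable fun k => ‖innerTerm r (lie2 ξ v) v k‖) ∧ ∑' k, ‖innerTerm r (lie2 ξ v) v k‖ ≤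
      4 ^ (r + 1) * (wienerNorm (r + 1) ξ ^ 2 * hsNorm (r + 1) v ^ 2) := by
  simp only [innerTerm_lie2 hr hξ hv]
  exact summable_tsum_fiber ((quadSymbolBound_lie2Symbol hr).quadTerm_bound hξ hv)

lemma hsInner_lie2 (hr : 0 ≤ r) (hξ : MemWiener (r + 1) ξ) (hv : memHs (r + 1) v) :
    hsInner r (lie2 ξ v) v = (∑' p, quadTerm (lie2Symbol r) ξ v p).re := by
  rw [((quadSymbolBound_lie2Symbol hr).quadTerm_bound hξ hv).1.of_norm.tsum_prod]
  exact congrArg Complex.re (tsum_congr (innerTerm_lie2 hr hξ hv))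

lemma wt_mul_norm_lie_sq (hr : 0 ≤ r) (hξ : MemWiener (r + 1) ξ) (hreal : isReal ξ)
    (hv : memHs (r + 1) v) (m : ℤ) : ((wt r m * ‖lie ξ v m‖ ^ 2 : ℝ) : ℂ) =
      ∑' q : ℤ × ℤ, quadTerm (lieSymbol r) ξ v (q.1, m, q.2) := by
  have polyBound := (hv.mono (by linarith : 0 ≤ r + 1)).polyBound
  have summable : Summable fun j => ξ (m - j) * v j := by
    rw [← (Equiv.subLeft m).summable_iff]
    simpa only [Function.comp_def, Equiv.subLeft_apply, sub_sub_cancel] using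
      (hξ.mono (by linarith)).summable_mul le_rfl polyBound m
  have norm_sq : starRingEnd ℂ (mul ξ v m) * mul ξ v m = ∑' q : ℤ × ℤ,
      starRingEnd ℂ (ξ (m - q.1) * v q.1) * (ξ (m - q.2) * v q.2) := by
    rw [mul_apply_eq_tsum_sub, Complex.conj_tsum, tsum_mul_tsum_of_summable_norm _ summable.norm]
    simpa only [RCLike.norm_conj] using summable.norm
  have norm_sq_D1 : ((wt r m * ‖D1 (mul ξ v) m‖ ^ 2 : ℝ) : ℂ) =
      (oddWeight r m * m : ℝ) * (starRingEnd ℂ (mul ξ v m) * mul ξ v m) := by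
    rw [norm_D1, mul_pow, sq_abs, Complex.conj_mul', wt, oddWeight, weight]
    push_cast
    ring
  rw [lie_eq_D1_mul le_rfl (hξ.mono (by linarith)) polyBound, norm_sq_D1, norm_sq, ← tsum_mul_left]
  refine tsum_congr fun q => ?_
  rw [quadTerm, lieSymbol, map_mul, ← hreal, neg_sub]
  ring

lemma hsNorm_lie_sq (hr : 0 ≤ r) (hξ : MemWiener (r + 1) ξ) (hreal : isReal ξ)
    (hv : memHs (r + 1) v) :
    ((hsNorm r (lie ξ v) ^ 2 : ℝ) : ℂ) = ∑' p, quadTerm (lieSymbol r) ξ v p := by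
  have summable := ((quadSymbolBound_lieSymbol hr).quadTerm_bound hξ hv).1.of_norm
  let middleFirst : ℤ × ℤ × ℤ ≃ ℤ × ℤ × ℤ :=
    Function.Involutive.toPerm (fun p => (p.2.1, p.1, p.2.2)) fun _ => rfl
  have reordered := (middleFirst.summable_iff.mpr summable).tsum_prod
  rw [hsNorm_sq, Complex.ofReal_tsum, ← middleFirst.tsum_eq (quadTerm (lieSymbol r) ξ v)]
  refine Eq.trans ?_ reordered.symm
  exact tsum_congr (wt_mul_norm_lie_sq hr hξ hreal hv)

lemma hsNorm_lie_sq_le (hr : 0 ≤ r) (hξ : MemWiener (r + 1) ξ) (hreal : isReal ξ)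
    (hv : memHs (r + 1) v) : hsNorm r (lie ξ v) ^ 2 ≤
      4 ^ (r + 1) * (wienerNorm (r + 1) ξ ^ 2 * hsNorm (r + 1) v ^ 2) := by
  obtain ⟨summable, bound⟩ := (quadSymbolBound_lieSymbol hr).quadTerm_bound hξ hv
  have norm_le := norm_tsum_le_tsum_norm summable
  rw [← hsNorm_lie_sq hr hξ hreal hv, Complex.norm_real, Real.norm_of_nonneg (sq_nonneg _)]
    at norm_le
  exact norm_le.trans bound

lemma hsInner_lie2_add_hsNorm_lie_sq_le (hr : 0 ≤ r) (hξ : MemWiener (r + 1) ξ)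
    (hreal : isReal ξ) (hv : memHs (r + 1) v) :
    hsInner r (lie2 ξ v) v + hsNorm r (lie ξ v) ^ 2 ≤
      2 * (r + 1) ^ 2 * 4 ^ r * (wienerNorm (r + 1) ξ ^ 2 * hsNorm r v ^ 2) := by
  have sum_lie2 := ((quadSymbolBound_lie2Symbol hr).quadTerm_bound hξ hv).1.of_norm.hasSum
  have sum_lie := ((quadSymbolBound_lieSymbol hr).quadTerm_bound hξ hv).1.of_norm.hasSum
  rw [← hsNorm_lie_sq hr hξ hreal hv] at sum_lie
  have symmetrized := hasSum_quadTerm_symmetrize hreal (hasSum_quadTerm_add sum_lie2 sum_lie)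
  rw [Complex.add_re, Complex.ofReal_re, ← hsInner_lie2 hr hξ hv] at symmetrized
  obtain ⟨summable, bound⟩ := (quadSymbolBound_symmetrize hr).quadTerm_bound hξ
    (hv.mono (by linarith : r ≤ r + 1))
  have norm_le := norm_tsum_le_tsum_norm summable
  rw [symmetrized.tsum_eq, Complex.norm_real, Real.norm_eq_abs] at norm_le
  linarith [le_abs_self (4 * (hsInner r (lie2 ξ v) v + hsNorm r (lie ξ v) ^ 2))]

end Noise

section Transport

variable {r : ℝ} {u v w : FC}

lemma innerTerm_mul (r : ℝ) (u v w : FC) (k : ℤ) :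
    innerTerm r (mul w u) v k = ∑' j, bilinTerm (fun k _ => weight r k) u w v (k, j) := by
  rw [innerTerm, mul, ← tsum_mul_right, ← tsum_mul_left]
  refine tsum_congr fun j => ?_
  rw [bilinTerm, wt, weight]
  ring

lemma innerTerm_mul_D1 (r : ℝ) (u v : FC) (k : ℤ) : innerTerm r (mul u (D1 v)) v k =
    Complex.I * ∑' j, bilinTerm (fun k j => j * weight r k) u v v (k, j) := by
  rw [innerTerm, mul_apply_eq_tsum_sub, ← tsum_mul_right, ← tsum_mul_left, ← tsum_mul_left]
  refine tsum_congr fun j => ?_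
  rw [bilinTerm, wt, weight, D1]
  push_cast
  ring

lemma abs_hsInner_mul_le (hr : 0 ≤ r) (hu : MemWiener (r / 2) u) (hw : memHs r w)
    (hv : memHs r v) : (Summable (innerTerm r (mul w u) v)) ∧ |hsInner r (mul w u) v| ≤
      2 ^ (r / 2) * (wienerNorm (r / 2) u * ((hsNorm r v ^ 2 + hsNorm r w ^ 2) / 2)) := by
  have fiber_bound := summable_tsum_fiber ((bilinSymbolBound_weight hr).bilinTerm_bound hu hw hv)
  simp only [← innerTerm_mul] at fiber_bound
  exact ⟨fiber_bound.1.of_norm, (Complex.abs_re_le_norm _).trans <|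
    (norm_tsum_le_tsum_norm fiber_bound.1).trans fiber_bound.2⟩

lemma abs_hsInner_mul_D1_le (hr : 0 ≤ r) (hu : MemWiener ((r + 1) / 2) u) (hreal : isReal u)
    (hv : memHs (r + 1) v) : (Summable (innerTerm r (mul u (D1 v)) v)) ∧
      |2 * hsInner r (mul u (D1 v)) v| ≤
        (2 * r + 1) * 2 ^ (r / 2) * (wienerNorm ((r + 1) / 2) u * hsNorm r v ^ 2) := by
  have summable := ((bilinSymbolBound_mul_weight hr).bilinTerm_bound hu hv hv).1.of_norm
  set z := ∑' p, bilinTerm (fun k j => j * weight r k) u v v p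
  have hasSum_inner : HasSum (innerTerm r (mul u (D1 v)) v) (Complex.I * z) := by
    simp only [funext (innerTerm_mul_D1 r u v)]
    exact (summable.hasSum.prod_fiberwise fun k => (summable.prod_factor k).hasSum).mul_left _
  refine ⟨hasSum_inner.summable, ?_⟩
  have commutator := hasSum_bilinTerm_antisymmetrize hreal summable.hasSum
  have hv' : memHs r v := hv.mono (by linarith)
  obtain ⟨summable_comm, bound⟩ := (bilinSymbolBound_commutator hr).bilinTerm_bound hu hv' hv'
  have norm_le := norm_tsum_le_tsum_norm summable_comm
  rw [commutator.tsum_eq] at norm_le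
  calc |2 * hsInner r (mul u (D1 v)) v| = ‖z - starRingEnd ℂ z‖ := by
        have : hsInner r (mul u (D1 v)) v = (Complex.I * z).re :=
          congrArg Complex.re hasSum_inner.tsum_eq
        rw [this, Complex.sub_conj, norm_mul, Complex.norm_I, mul_one, Complex.norm_real,
          Real.norm_eq_abs, Complex.I_mul_re, mul_neg, abs_neg]
    _ ≤ _ := norm_le.trans bound
    _ = _ := by rw [add_self_div_two]

end Transport

section NoiseSum

variable {r p A B : ℝ} {ξ : ℕ → FC} {c d v : FC}

lemma hasSum_hsInner_tsumFC {F : ℕ → FC}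
    (hF : Summable fun q : ℕ × ℤ => innerTerm r (F q.1) v q.2) :
    Summable (innerTerm r (tsumFC F) v) ∧
      HasSum (fun n => hsInner r (F n) v) (hsInner r (tsumFC F) v) := by
  have innerTerm_tsumFC : innerTerm r (tsumFC F) v = fun k => ∑' n, innerTerm r (F n) v k := by
    funext k
    simp only [innerTerm, tsumFC, tsum_mul_left, tsum_mul_right]
  refine ⟨innerTerm_tsumFC ▸ hF.prod_symm.prod, ?_⟩
  have exchange : ∑' k, innerTerm r (tsumFC F) v k = ∑' n, ∑' k, innerTerm r (F n) v k := by
    rw [innerTerm_tsumFC]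
    exact hF.tsum_comm
  rw [hsInner]
  change HasSum _ (∑' k, innerTerm r (tsumFC F) v k).re
  rw [exchange]
  exact Complex.hasSum_re hF.prod.hasSum

lemma summable_innerTerm_lie2 (hr : 0 ≤ r) (hξ : ∀ n, MemWiener (r + 1) (ξ n))
    (hsum : Summable fun n => wienerNorm (r + 1) (ξ n) ^ 2) (hv : memHs (r + 1) v) :
    Summable fun q : ℕ × ℤ => innerTerm r (lie2 (ξ q.1) v) v q.2 := by
  refine Summable.of_norm ((summable_prod_of_nonneg fun _ => norm_nonneg _).mpr
    ⟨fun n => (innerTerm_lie2_bound hr (hξ n) hv).1, ?_⟩)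
  exact ((hsum.mul_right _).mul_left _).of_nonneg_of_le
    (fun _ => tsum_nonneg fun _ => norm_nonneg _) fun n => (innerTerm_lie2_bound hr (hξ n) hv).2

lemma summable_hsNorm_lie_sq (hr : 0 ≤ r) (hξ : ∀ n, MemWiener (r + 1) (ξ n))
    (hreal : ∀ n, isReal (ξ n)) (hsum : Summable fun n => wienerNorm (r + 1) (ξ n) ^ 2)
    (hv : memHs (r + 1) v) : Summable fun n => hsNorm r (lie (ξ n) v) ^ 2 :=
  ((hsum.mul_right _).mul_left _).of_nonneg_of_le (fun _ => sq_nonneg _)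
    fun n => hsNorm_lie_sq_le hr (hξ n) (hreal n) hv

lemma hsInner_tsumFC_lie2_add_tsum_le (hr : 0 ≤ r) (hξ : ∀ n, MemWiener (r + 1) (ξ n))
    (hreal : ∀ n, isReal (ξ n)) (hsum : Summable fun n => wienerNorm (r + 1) (ξ n) ^ 2)
    (hv : memHs (r + 1) v) :
    hsInner r (tsumFC fun n => lie2 (ξ n) v) v + ∑' n, hsNorm r (lie (ξ n) v) ^ 2 ≤
      2 * (r + 1) ^ 2 * 4 ^ r * ((∑' n, wienerNorm (r + 1) (ξ n) ^ 2) * hsNorm r v ^ 2) := by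
  have inner := (hasSum_hsInner_tsumFC (F := fun n => lie2 (ξ n) v)
    (summable_innerTerm_lie2 hr hξ hsum hv)).2
  have norm_sq := summable_hsNorm_lie_sq hr hξ hreal hsum hv
  rw [← inner.tsum_eq, ← inner.summable.tsum_add norm_sq, ← tsum_mul_right, ← tsum_mul_left]
  exact (inner.summable.add norm_sq).tsum_le_tsum
    (fun n => hsInner_lie2_add_hsNorm_lie_sq_le hr (hξ n) (hreal n) hv)
    ((hsum.mul_right _).mul_left _)

lemma PolyBound.summable_lie2 (hp : 0 ≤ p) (hξ : ∀ n, MemWiener (p + 1) (ξ n))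
    (hsum : Summable fun n => wienerNorm (p + 1) (ξ n) ^ 2) (hd : PolyBound A p d) (k : ℤ) :
    Summable fun n => FC.lie2 (ξ n) d k := by
  refine Summable.of_norm_bounded
    (hsum.mul_left (2 ^ (p + 1 / 2) * (2 ^ p * A) * weight (p + 1) k)) fun n => ?_
  have := hd.const_nonneg
  have := weight_nonneg (p + 1) k
  calc ‖FC.lie2 (ξ n) d k‖ ≤ 2 ^ (p + 1 / 2) * (2 ^ p * A * wienerNorm p (ξ n)) *
        wienerNorm (p + 1 / 2) (ξ n) * weight (p + 1) k := hd.lie2 hp (hξ n) k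
    _ ≤ 2 ^ (p + 1 / 2) * (2 ^ p * A * wienerNorm (p + 1) (ξ n)) *
        wienerNorm (p + 1) (ξ n) * weight (p + 1) k := by
      have := wienerNorm_nonneg (p + 1 / 2) (ξ n)
      have := wienerNorm_nonneg (p + 1) (ξ n)
      gcongr
      · exact (hξ n).wienerNorm_mono (by linarith)
      · exact (hξ n).wienerNorm_mono (by linarith)
    _ = _ := by ring

lemma tsumFC_lie2_sub (hp : 0 ≤ p) (hξ : ∀ n, MemWiener (p + 1) (ξ n))
    (hsum : Summable fun n => wienerNorm (p + 1) (ξ n) ^ 2) (hc : PolyBound A p c)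
    (hd : PolyBound B p d) : (tsumFC fun n => lie2 (ξ n) (c - d)) =
      (tsumFC fun n => lie2 (ξ n) c) - tsumFC fun n => lie2 (ξ n) d := by
  funext k
  simp only [tsumFC, Pi.sub_apply, lie2_sub hp (hξ _) hc hd]
  exact (hc.summable_lie2 hp hξ hsum k).tsum_sub (hd.summable_lie2 hp hξ hsum k)

end NoiseSum

section Drift

variable {r A B : ℝ} {ξ : ℕ → FC} {u v θ ρ : FC}

lemma isReal.hilbert (hu : isReal u) : isReal (hilbert u) := by
  intro k
  simp only [FC.hilbert, hu k, Int.sign_neg, map_mul, map_neg, Complex.conj_I, map_intCast,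
    Int.cast_neg]
  ring

lemma abs_hsInner_mul_hilbert_D1_le (hr : 0 ≤ r) (hu : MemWiener ((r + 1) / 2) u)
    (hv : memHs r v) : Summable (innerTerm r (mul (hilbert v) (D1 u)) v) ∧
      |hsInner r (mul (hilbert v) (D1 u)) v| ≤
        2 ^ (r / 2) * (wienerNorm ((r + 1) / 2) u * hsNorm r v ^ 2) := by
  rw [add_div] at hu ⊢
  obtain ⟨summable, bound⟩ := abs_hsInner_mul_le hr hu.D1 hv.hilbert hv
  refine ⟨summable, bound.trans ?_⟩
  have hilbert_sq_le := pow_le_pow_left₀ (hsNorm_nonneg _ _) hv.hsNorm_hilbert_le 2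
  have := wienerNorm_nonneg (r / 2 + 1 / 2) u
  gcongr
  · exact hu.wienerNorm_D1_le
  · linarith

lemma abs_hsInner_mul_hilbert_D1_self_le (hr : 0 ≤ r) (hu : MemWiener ((r + 1) / 2) u)
    (hreal : isReal u) (hv : memHs (r + 1) v) :
    Summable (innerTerm r (mul (hilbert u) (D1 v)) v) ∧
      |2 * hsInner r (mul (hilbert u) (D1 v)) v| ≤
        (2 * r + 1) * 2 ^ (r / 2) * (wienerNorm ((r + 1) / 2) u * hsNorm r v ^ 2) := by
  obtain ⟨summable, bound⟩ := abs_hsInner_mul_D1_le hr hu.hilbert hreal.hilbert hv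
  refine ⟨summable, bound.trans ?_⟩
  gcongr
  exact hu.wienerNorm_hilbert_le

lemma mul_hilbert_D1_sub (hθ : MemWiener (1 / 2) θ) (hρ : MemWiener (1 / 2) ρ)
    (hθ' : PolyBound A 0 θ) (hρ' : PolyBound B 0 ρ) :
    mul (hilbert θ) (D1 θ) - mul (hilbert ρ) (D1 ρ) =
      mul (hilbert (θ - ρ)) (D1 θ) + mul (hilbert ρ) (D1 (θ - ρ)) := by
  have half_nonneg : (0 : ℝ) ≤ 1 / 2 := by norm_num
  have hDθ := hθ'.D1
  have hDρ := hρ'.D1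
  rw [zero_add] at hDθ hDρ
  rw [hilbert_sub, D1_sub, FC.sub_mul half_nonneg hθ.hilbert hρ.hilbert hDθ,
    FC.mul_sub half_nonneg hρ.hilbert hDθ hDρ]
  abel

lemma gCCF_sub (hξ : ∀ n, MemWiener 1 (ξ n)) (hsum : Summable fun n => wienerNorm 1 (ξ n) ^ 2)
    (hθ : MemWiener (1 / 2) θ) (hρ : MemWiener (1 / 2) ρ) (hθ' : PolyBound A 0 θ)
    (hρ' : PolyBound B 0 ρ) : gCCF ξ θ - gCCF ξ ρ =
      (1 / 2 : ℝ) • (tsumFC fun n => lie2 (ξ n) (θ - ρ)) -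
        (mul (hilbert (θ - ρ)) (D1 θ) + mul (hilbert ρ) (D1 (θ - ρ))) := by
  rw [← mul_hilbert_D1_sub hθ hρ hθ' hρ', tsumFC_lie2_sub le_rfl (by simpa using hξ)
    (by simpa using hsum) hθ' hρ', smul_sub, gCCF, gCCF]
  abel

lemma two_mul_hsInner_half_smul_sub_add {c d e : FC} (hc : Summable (innerTerm r c v))
    (hd : Summable (innerTerm r d v)) (he : Summable (innerTerm r e v)) :
    2 * hsInner r ((1 / 2 : ℝ) • c - (d + e)) v =
      hsInner r c v - 2 * hsInner r d v - 2 * hsInner r e v := by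
  have expand (k : ℤ) : innerTerm r ((1 / 2 : ℝ) • c - (d + e)) v k =
      1 / 2 * innerTerm r c v k - (innerTerm r d v k + innerTerm r e v k) := by
    simp only [innerTerm, Pi.sub_apply, Pi.smul_apply, Pi.add_apply, Complex.real_smul]
    push_cast
    ring
  have total : ∑' k, innerTerm r ((1 / 2 : ℝ) • c - (d + e)) v k = 1 / 2 * ∑' k, innerTerm r c v k -
      (∑' k, innerTerm r d v k + ∑' k, innerTerm r e v k) := by
    simp only [expand]
    rw [(hc.mul_left _).tsum_sub (hd.add he), hd.tsum_add he, tsum_mul_left]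
  have real_part := congrArg Complex.re total
  change hsInner r _ v = (1 / 2 * _ - (_ + _) : ℂ).re at real_part
  rw [real_part]
  simp [hsInner, innerTerm]
  ring

/-- The constant comes from the three parts of the difference of drifts: the noise, the stretching
term `𝓗(θ-ρ) ∂ₓθ` and the transport term `𝓗ρ ∂ₓ(θ-ρ)`. -/
lemma hsInner_gCCF_sub_add_tsum_le (hr : 0 ≤ r) (hξ : ∀ n, MemWiener (r + 1) (ξ n))
    (hreal : ∀ n, isReal (ξ n)) (hsum : Summable fun n => wienerNorm (r + 1) (ξ n) ^ 2)
    (hθ : MemWiener ((r + 1) / 2) θ) (hθ' : memHs (r + 1) θ)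
    (hρ : MemWiener ((r + 1) / 2) ρ) (hρ' : memHs (r + 1) ρ) (hρreal : isReal ρ) :
    2 * hsInner r (gCCF ξ θ - gCCF ξ ρ) (θ - ρ) + ∑' n, hsNorm r (lie (ξ n) (θ - ρ)) ^ 2 ≤
      (2 * (r + 1) ^ 2 * 4 ^ r * (∑' n, wienerNorm (r + 1) (ξ n) ^ 2) +
        2 * 2 ^ (r / 2) * wienerNorm ((r + 1) / 2) θ +
        (2 * r + 1) * 2 ^ (r / 2) * wienerNorm ((r + 1) / 2) ρ) * hsNorm r (θ - ρ) ^ 2 := by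
  have hv : memHs (r + 1) (θ - ρ) := hθ'.sub hρ'
  have wiener_one (n : ℕ) : MemWiener 1 (ξ n) := (hξ n).mono (by linarith)
  have summable_one : Summable fun n => wienerNorm 1 (ξ n) ^ 2 :=
    hsum.of_nonneg_of_le (fun _ => sq_nonneg _) fun n =>
      pow_le_pow_left₀ (wienerNorm_nonneg _ _) ((hξ n).wienerNorm_mono (by linarith)) 2
  have noise_summable := (hasSum_hsInner_tsumFC (F := fun n => lie2 (ξ n) (θ - ρ))
    (summable_innerTerm_lie2 hr hξ hsum hv)).1
  have noise := hsInner_tsumFC_lie2_add_tsum_le hr hξ hreal hsum hv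
  obtain ⟨stretching_summable, stretching⟩ :=
    abs_hsInner_mul_hilbert_D1_le hr hθ (hv.mono (by linarith : r ≤ r + 1))
  obtain ⟨transport_summable, transport⟩ := abs_hsInner_mul_hilbert_D1_self_le hr hρ hρreal hv
  rw [gCCF_sub wiener_one summable_one (hθ.mono (by linarith)) (hρ.mono (by linarith))
      (hθ'.mono (by linarith)).polyBound (hρ'.mono (by linarith)).polyBound,
    two_mul_hsInner_half_smul_sub_add noise_summable stretching_summable transport_summable]
  linarith [(abs_le.mp stretching).1, (abs_le.mp transport).1]

end Drift

section SobolevBound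

variable {r β : ℝ} {ξ : ℕ → FC} {θ ρ : FC}

/-- The constant `C` of the theorem in `H^r`, for noise coefficients with
`β = Σ_k ‖ξ_k‖²` in the Wiener norm of order `r + 1`. -/
def driftConst (r β : ℝ) : ℝ :=
  2 * (r + 1) ^ 2 * 4 ^ r * β + 2 * (r + 1) * 2 ^ (r / 2) * sobolevConst + 1

lemma driftConst_pos (hr : 0 ≤ r) (hβ : 0 ≤ β) : 0 < driftConst r β := by
  have := sobolevConst_nonneg
  unfold driftConst
  positivity

lemma summable_sq {ι : Type*} {f : ι → ℝ} (hf : Summable f) : Summable fun i => f i ^ 2 := by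
  simpa only [sq] using hf.norm.mul_tendsto_const hf.tendsto_cofinite_zero

lemma summable_wienerNorm_sq {p : ℝ} (hξ : ∀ n, memHs (2 * p + 1) (ξ n))
    (hsum : Summable fun n => hsNorm (2 * p + 1) (ξ n) ^ 2) :
    Summable fun n => wienerNorm p (ξ n) ^ 2 := by
  refine (hsum.mul_left (sobolevConst ^ 2)).of_nonneg_of_le (fun _ => sq_nonneg _) fun n => ?_
  rw [← mul_pow]
  exact pow_le_pow_left₀ (wienerNorm_nonneg _ _) (hξ n).memWiener_and_wienerNorm_le.2 2

lemma drift_coefficient_le {a b x y : ℝ} (hr : 0 ≤ r) (hβ : 0 ≤ β) (hx : 0 ≤ x) (hy : 0 ≤ y)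
    (ha : a ≤ sobolevConst * x) (hb : b ≤ sobolevConst * y) :
    2 * (r + 1) ^ 2 * 4 ^ r * β + 2 * 2 ^ (r / 2) * a + (2 * r + 1) * 2 ^ (r / 2) * b ≤
      driftConst r β * (1 + x ^ 2 + y ^ 2) := by
  have := sobolevConst_nonneg
  set N := 2 * (r + 1) ^ 2 * 4 ^ r * β with hN
  set K := 2 * (r + 1) * 2 ^ (r / 2) * sobolevConst with hK
  have N_nonneg : 0 ≤ N := by positivity
  have : 0 ≤ K := by positivity
  have add_le : x + y ≤ 1 + x ^ 2 + y ^ 2 := by nlinarith [sq_nonneg (x - 1), sq_nonneg (y - 1)]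
  calc N + 2 * 2 ^ (r / 2) * a + (2 * r + 1) * 2 ^ (r / 2) * b
      ≤ N + 2 * 2 ^ (r / 2) * (sobolevConst * x) +
          (2 * r + 1) * 2 ^ (r / 2) * (sobolevConst * y) := by gcongr
    _ ≤ N + 2 * (r + 1) * 2 ^ (r / 2) * (sobolevConst * x) +
          2 * (r + 1) * 2 ^ (r / 2) * (sobolevConst * y) := by
        gcongr <;> linarith
    _ = N + K * (x + y) := by ring
    _ ≤ N * (1 + x ^ 2 + y ^ 2) + K * (1 + x ^ 2 + y ^ 2) := by
        gcongr
        exact le_mul_of_one_le_right N_nonneg (by linarith [sq_nonneg x, sq_nonneg y])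
    _ ≤ driftConst r β * (1 + x ^ 2 + y ^ 2) := by
        rw [driftConst, ← hN, ← hK]
        linarith [sq_nonneg x, sq_nonneg y]

lemma hsInner_gCCF_sub_add_tsum_le_driftConst (hr : 0 ≤ r) (hξ : ∀ n, MemWiener (r + 1) (ξ n))
    (hreal : ∀ n, isReal (ξ n)) (hsum : Summable fun n => wienerNorm (r + 1) (ξ n) ^ 2)
    (hθ : memHs (r + 2) θ) (hρ : memHs (r + 2) ρ) (hρreal : isReal ρ) :
    2 * hsInner r (gCCF ξ θ - gCCF ξ ρ) (θ - ρ) + ∑' n, hsNorm r (lie (ξ n) (θ - ρ)) ^ 2 ≤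
      driftConst r (∑' n, wienerNorm (r + 1) (ξ n) ^ 2) *
        (1 + hsNorm (r + 2) θ ^ 2 + hsNorm (r + 2) ρ ^ 2) * hsNorm r (θ - ρ) ^ 2 := by
  have order : r + 2 = 2 * ((r + 1) / 2) + 1 := by ring
  obtain ⟨wiener_θ, wienerNorm_θ⟩ := (order ▸ hθ).memWiener_and_wienerNorm_le
  obtain ⟨wiener_ρ, wienerNorm_ρ⟩ := (order ▸ hρ).memWiener_and_wienerNorm_le
  rw [← order] at wienerNorm_θ wienerNorm_ρ
  refine (hsInner_gCCF_sub_add_tsum_le hr hξ hreal hsum wiener_θ (hθ.mono (by linarith))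
    wiener_ρ (hρ.mono (by linarith)) hρreal).trans ?_
  exact mul_le_mul_of_nonneg_right (drift_coefficient_le hr (tsum_nonneg fun _ => sq_nonneg _)
    (hsNorm_nonneg _ _) (hsNorm_nonneg _ _) wienerNorm_θ wienerNorm_ρ) (sq_nonneg _)

end SobolevBound

end FC

theorem statement5_general (s : ℝ) (hs : 2 ≤ s) (ξ : ℕ → FC)
    (hξmem : ∀ k : ℕ, FC.memHs (2 * s - 1) (ξ k)) (hξreal : ∀ k : ℕ, FC.isReal (ξ k))
    (hξsum : Summable fun k : ℕ => FC.hsNorm (2 * s - 1) (ξ k) ^ 2) :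
    ∃ C > (0 : ℝ), ∀ θ ρ : FC, FC.memHs s θ → FC.memHs s ρ → FC.isReal ρ →
      Summable (fun k : ℕ => FC.hsNorm (s - 2) (FC.lie (ξ k) (θ - ρ)) ^ 2) ∧
      2 * FC.hsInner (s - 2) (gCCF ξ θ - gCCF ξ ρ) (θ - ρ)
          + ∑' k : ℕ, FC.hsNorm (s - 2) (FC.lie (ξ k) (θ - ρ)) ^ 2
        ≤ C * (1 + FC.hsNorm s θ ^ 2 + FC.hsNorm s ρ ^ 2)
            * FC.hsNorm (s - 2) (θ - ρ) ^ 2 := by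
  obtain ⟨r, rfl⟩ : ∃ r, s = r + 2 := ⟨s - 2, by ring⟩
  have hr : 0 ≤ r := by linarith
  rw [show 2 * (r + 2) - 1 = 2 * (r + 1) + 1 by ring] at hξsum
  simp only [show 2 * (r + 2) - 1 = 2 * (r + 1) + 1 by ring] at hξmem
  rw [add_sub_cancel_right]
  have hξ (k : ℕ) := (hξmem k).memWiener_and_wienerNorm_le
  have wiener_sum := FC.summable_wienerNorm_sq hξmem hξsum
  refine ⟨FC.driftConst r (∑' k, FC.wienerNorm (r + 1) (ξ k) ^ 2),
    FC.driftConst_pos hr (tsum_nonneg fun _ => sq_nonneg _), fun θ ρ hθ hρ hρreal => ⟨?_, ?_⟩⟩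
  · exact FC.summable_hsNorm_lie_sq hr (fun k => (hξ k).1) hξreal wiener_sum
      ((hθ.sub hρ).mono (by linarith))
  · exact FC.hsInner_gCCF_sub_add_tsum_le_driftConst hr (fun k => (hξ k).1) hξreal wiener_sum
      hθ hρ hρreal

/-- Let `s > 7/2` and `Σ_k ‖ξ_k‖_{H^σ} < ∞` for all `σ ≥ 0`.  Then there is
`C > 0` such that for all `θ, ρ ∈ H^s(𝕋)`:
`2 (g(θ)−g(ρ), θ−ρ)_{H^{s-2}} + Σ_k ‖𝓛_{ξ_k}(θ−ρ)‖²_{H^{s-2}}`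
`≤ C (1 + ‖θ‖²_{H^s} + ‖ρ‖²_{H^s}) ‖θ−ρ‖²_{H^{s-2}}`. -/
theorem statement5 (s : ℝ) (hs : 7 / 2 < s) (ξ : ℕ → FC)
    (hξmem : ∀ σ : ℝ, 0 ≤ σ → ∀ k : ℕ, FC.memHs σ (ξ k))
    (hξreal : ∀ k : ℕ, FC.isReal (ξ k))
    (hξsum : ∀ σ : ℝ, 0 ≤ σ → Summable fun k : ℕ => FC.hsNorm σ (ξ k)) :
    ∃ C > (0 : ℝ), ∀ θ ρ : FC,
      FC.memHs s θ → FC.memHs s ρ → FC.isReal θ → FC.isReal ρ →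
      Summable (fun k : ℕ => FC.hsNorm (s - 2) (FC.lie (ξ k) (θ - ρ)) ^ 2) ∧
      2 * FC.hsInner (s - 2) (gCCF ξ θ - gCCF ξ ρ) (θ - ρ)
          + ∑' k : ℕ, FC.hsNorm (s - 2) (FC.lie (ξ k) (θ - ρ)) ^ 2
        ≤ C * (1 + FC.hsNorm s θ ^ 2 + FC.hsNorm s ρ ^ 2)
            * FC.hsNorm (s - 2) (θ - ρ) ^ 2 := by
  obtain ⟨C, hC, bound⟩ := statement5_general s (by linarith) ξ (hξmem _ (by linarith)) hξreal
    (FC.summable_sq (hξsum _ (by linarith)))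
  exact ⟨C, hC, fun θ ρ hθ hρ _ hρreal => bound θ ρ hθ hρ hρreal⟩
end
end

section
/- Let d ≥ 1 and s > d/2 + 1, and suppose (ξ_k)_{k≥1} is a sequence of vector fields ξ_k: 𝕋^d → ℝ^d with Σ_{k≥1} ‖ξ_k‖_{H^σ} < ∞ for every σ ≥ 0. Then there is a constant C > 0 (depending on s, d and (ξ_k)) such that for every scalar f ∈ H^{s+2}(𝕋^d): (D^s Σ_{k=1}^∞ 𝓛²_{ξ_k} f, D^s f)_{L²} + Σ_{k=1}^∞ ‖D^s 𝓛_{ξ_k} f‖²_{L²} ≤ C ‖f‖²_{H^s}. -/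
noncomputable section
open scoped BigOperators

/-- A (complex-valued) function on the torus `𝕋^d = (ℝ/2πℤ)^d`, represented by its
Fourier coefficients, indexed by the lattice `ℤ^d`. -/
abbrev FCd (d : ℕ) := (Fin d → ℤ) → ℂ

namespace FCd

variable {d : ℕ}

/-- The Sobolev weight `(1+|k|²)^s`. -/
def wt (s : ℝ) (k : Fin d → ℤ) : ℝ := (1 + ∑ i, ((k i : ℝ)) ^ 2) ^ s

/-- `c` represents a function belonging to the Sobolev space `H^s(𝕋^d)`. -/
def memHs (s : ℝ) (c : FCd d) : Prop := Summable fun k : Fin d → ℤ => wt s k * ‖c k‖ ^ 2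

/-- The `H^s(𝕋^d)` norm: `‖f‖²_{H^s} = Σ_{k∈ℤ^d} (1+|k|²)^s |f̂(k)|²`. -/
def hsNorm (s : ℝ) (c : FCd d) : ℝ := Real.sqrt (∑' k : Fin d → ℤ, wt s k * ‖c k‖ ^ 2)

/-- `(D^s f, D^s g)_{L²} = Σ_{k∈ℤ^d} (1+|k|²)^s f̂(k) conj(ĝ(k))`, where `D^s` is the
Fourier multiplier with symbol `(1+|k|²)^{s/2}` (its real part; the sum is real for
real-valued functions). -/
def hsInner (s : ℝ) (c e : FCd d) : ℝ :=
  (∑' k : Fin d → ℤ, ((wt s k : ℂ) * (c k * (starRingEnd ℂ) (e k)))).re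

/-- `c` represents a real-valued function (conjugate-symmetric coefficients). -/
def isReal (c : FCd d) : Prop := ∀ k : Fin d → ℤ, c (-k) = (starRingEnd ℂ) (c k)

/-- The partial derivative `∂ᵢ`, i.e. the Fourier multiplier `i kᵢ`. -/
def deriv (i : Fin d) (c : FCd d) : FCd d := fun k => Complex.I * (k i : ℂ) * c k

/-- The pointwise product of functions, i.e. convolution of Fourier coefficients. -/
def mul (c e : FCd d) : FCd d := fun k => ∑' j : Fin d → ℤ, c j * e (k - j)

/-- The generalized Lie derivative of a scalar function along a vector field:
`𝓛_ξ f = ξ·∇f + (div ξ) f`. -/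
def lie (ξ : Fin d → FCd d) (c : FCd d) : FCd d :=
  (∑ i, mul (ξ i) (deriv i c)) + mul (∑ i, deriv i (ξ i)) c

/-- `𝓛²_ξ f = 𝓛_ξ (𝓛_ξ f)`. -/
def lie2 (ξ : Fin d → FCd d) (c : FCd d) : FCd d := lie ξ (lie ξ c)

/-- The `H^s` norm of a vector field: `‖ξ‖² = Σᵢ ‖ξᵢ‖²_{H^s}`. -/
def vecNorm (s : ℝ) (ξ : Fin d → FCd d) : ℝ := Real.sqrt (∑ i, hsNorm s (ξ i) ^ 2)

/-- The coefficientwise sum `Σ_{k∈ℕ} F k` of a sequence of functions. -/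
def tsumFCd (F : ℕ → FCd d) : FCd d := fun m => ∑' k : ℕ, F k m

end FCd

/-! In Fourier variables both `(𝓛²_{ξ_k} f, f)_{H^s}` and `‖𝓛_{ξ_k} f‖²_{H^s}` are sums over paths
`m → m + β → m + β + α`, where `β` and `α` are frequencies of `ξ_k`, of a symbol times
`ξ̂_k(α) ξ̂_k(β) f̂(m) conj f̂(m + β + α)`. Each symbol alone has order `2s + 2`. As `ξ_k` is real,
complex conjugation reverses the paths, and the amplitude is unchanged when the two modes of a path
are exchanged; so only the symmetrised symbol matters. In it the two leading orders cancel, since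
the weight `⟨m⟩^{2s}` occurs either through its second difference
`⟨m + β + α⟩^{2s} - ⟨m + β⟩^{2s} - ⟨m + α⟩^{2s} + ⟨m⟩^{2s}`, of order `2s - 2`, or multiplied by
factors of correspondingly lower order. A form whose symbol has order `2s` is bounded on `H^s` by
Peetre's inequality and Cauchy–Schwarz, the rapid decay of `ξ̂_k` absorbing all losses in `α`, `β`.
-/

section RealPowers

variable {a b M : ℝ}

lemma rpow_le_rpow_abs_mul_rpow (ha : 0 < a) (hb : 0 < b) (hba : b ≤ M * a) (hab : a ≤ M * b)
    (s : ℝ) : b ^ s ≤ M ^ |s| * a ^ s := by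
  have hM : 0 < M := pos_of_mul_pos_left (hb.trans_le hba) ha.le
  rcases le_total 0 s with hs | hs
  · rw [abs_of_nonneg hs, ← Real.mul_rpow hM.le ha.le]
    gcongr
  · rw [abs_of_nonpos hs, Real.rpow_neg hM.le, ← div_eq_inv_mul, le_div_iff₀' (by positivity),
      ← Real.mul_rpow hM.le hb.le]
    exact Real.rpow_le_rpow_of_nonpos ha hab hs

lemma comparable_of_mem_uIcc {c : ℝ} (ha : 0 < a) (hM : 1 ≤ M) (hba : b ≤ M * a)
    (hab : a ≤ M * b) (hc : c ∈ Set.uIcc a b) : 0 < c ∧ c ≤ M * a ∧ a ≤ M * c := by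
  have hM0 : 0 < M := one_pos.trans_le hM
  have hb : 0 < b := pos_of_mul_pos_right (ha.trans_le hab) hM0.le
  have haa : a ≤ M * a := le_mul_of_one_le_left ha.le hM
  rcases Set.mem_uIcc.mp hc with ⟨hac, hcb⟩ | ⟨hbc, hca⟩
  · exact ⟨by linarith, by linarith, by nlinarith⟩
  · exact ⟨by linarith, by linarith, by nlinarith⟩

lemma abs_rpow_sub_rpow_le (ha : 0 < a) (hM : 1 ≤ M) (hba : b ≤ M * a) (hab : a ≤ M * b)
    (s : ℝ) : |b ^ s - a ^ s| ≤ |s| * (M ^ |s - 1| * a ^ (s - 1)) * |b - a| := by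
  have comparable {c : ℝ} (hc : c ∈ Set.uIcc a b) := comparable_of_mem_uIcc ha hM hba hab hc
  refine (convex_uIcc a b).norm_image_sub_le_of_norm_hasDerivWithin_le (𝕜 := ℝ)
    (f := fun x ↦ x ^ s) (f' := fun x ↦ s * x ^ (s - 1)) (fun c hc ↦ ?_) (fun c hc ↦ ?_)
    Set.left_mem_uIcc Set.right_mem_uIcc
  · exact (Real.hasDerivAt_rpow_const (Or.inl (comparable hc).1.ne')).hasDerivWithinAt
  · obtain ⟨hc0, hca, hac⟩ := comparable hc
    rw [norm_mul, Real.norm_eq_abs, Real.norm_of_nonneg (Real.rpow_nonneg hc0.le _)]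
    gcongr
    exact rpow_le_rpow_abs_mul_rpow ha hc0 hca hac _

lemma abs_rpow_sub_linear_le (ha : 0 < a) (hM : 1 ≤ M) (hba : b ≤ M * a) (hab : a ≤ M * b)
    (s : ℝ) : |b ^ s - a ^ s - s * a ^ (s - 1) * (b - a)| ≤
      |s| * |s - 1| * (M ^ |s - 2| * a ^ (s - 2)) * |b - a| ^ 2 := by
  have comparable {c : ℝ} (hc : c ∈ Set.uIcc a b) := comparable_of_mem_uIcc ha hM hba hab hc
  have norm_deriv_le (c : ℝ) (hc : c ∈ Set.uIcc a b) : ‖s * c ^ (s - 1) - s * a ^ (s - 1)‖ ≤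
      |s| * |s - 1| * (M ^ |s - 2| * a ^ (s - 2)) * |b - a| := by
    obtain ⟨-, hca, hac⟩ := comparable hc
    have hdiff := abs_rpow_sub_rpow_le ha hM hca hac (s - 1)
    rw [show s - 1 - 1 = s - 2 by ring] at hdiff
    rw [← mul_sub, norm_mul, Real.norm_eq_abs, Real.norm_eq_abs, mul_assoc |s|, mul_assoc |s|]
    gcongr
    refine hdiff.trans ?_
    gcongr _ * ?_
    exact Set.abs_sub_left_of_mem_uIcc hc
  have hderiv (c : ℝ) (hc : c ∈ Set.uIcc a b) : HasDerivWithinAt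
      (fun x ↦ x ^ s - s * a ^ (s - 1) * x) (s * c ^ (s - 1) - s * a ^ (s - 1))
      (Set.uIcc a b) c := by
    have hpow := Real.hasDerivAt_rpow_const (p := s) (Or.inl (comparable hc).1.ne')
    have h := hpow.sub ((hasDerivAt_id c).const_mul (s * a ^ (s - 1)))
    rw [mul_one] at h
    exact h.hasDerivWithinAt
  calc |b ^ s - a ^ s - s * a ^ (s - 1) * (b - a)|
      = ‖b ^ s - s * a ^ (s - 1) * b - (a ^ s - s * a ^ (s - 1) * a)‖ := by
        rw [Real.norm_eq_abs]; congr 1; ring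
    _ ≤ |s| * |s - 1| * (M ^ |s - 2| * a ^ (s - 2)) * |b - a| * ‖b - a‖ :=
        (convex_uIcc a b).norm_image_sub_le_of_norm_hasDerivWithin_le hderiv norm_deriv_le
          Set.left_mem_uIcc Set.right_mem_uIcc
    _ = _ := by rw [Real.norm_eq_abs]; ring

end RealPowers

namespace FCd

variable {d : ℕ}

section Weights

/-- The squared Japanese bracket `⟨k⟩² = 1 + |k|²`, so that `wt s k = ⟨k⟩^{2s}`. -/
def bracketSq (k : Fin d → ℤ) : ℝ := 1 + ∑ i, (k i : ℝ) ^ 2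

lemma wt_eq_bracketSq_rpow (s : ℝ) (k : Fin d → ℤ) : wt s k = bracketSq k ^ s := rfl

lemma wt_zero (k : Fin d → ℤ) : wt 0 k = 1 := Real.rpow_zero _

lemma wt_one (k : Fin d → ℤ) : wt 1 k = bracketSq k := Real.rpow_one _

lemma sq_coord_le_bracketSq_sub_one (k : Fin d → ℤ) (i : Fin d) :
    (k i : ℝ) ^ 2 ≤ bracketSq k - 1 := by
  rw [bracketSq, add_sub_cancel_left]
  exact Finset.single_le_sum (f := fun i ↦ (k i : ℝ) ^ 2) (fun _ _ ↦ sq_nonneg _)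
    (Finset.mem_univ i)

lemma one_le_bracketSq (k : Fin d → ℤ) : 1 ≤ bracketSq k :=
  le_add_of_nonneg_right (Finset.sum_nonneg fun _ _ ↦ sq_nonneg _)

lemma bracketSq_pos (k : Fin d → ℤ) : 0 < bracketSq k := one_pos.trans_le (one_le_bracketSq k)

lemma bracketSq_neg (k : Fin d → ℤ) : bracketSq (-k) = bracketSq k := by simp [bracketSq]

lemma bracketSq_add (m τ : Fin d → ℤ) :
    bracketSq (m + τ) = bracketSq m + (2 * ∑ i, (m i : ℝ) * τ i + (bracketSq τ - 1)) := by
  simp only [bracketSq, Pi.add_apply, Int.cast_add, add_sq, Finset.sum_add_distrib,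
    Finset.mul_sum, mul_assoc]
  ring

lemma wt_pos (s : ℝ) (k : Fin d → ℤ) : 0 < wt s k := Real.rpow_pos_of_pos (bracketSq_pos k) s

lemma wt_nonneg (s : ℝ) (k : Fin d → ℤ) : 0 ≤ wt s k := (wt_pos s k).le

lemma wt_add (s t : ℝ) (k : Fin d → ℤ) : wt (s + t) k = wt s k * wt t k :=
  Real.rpow_add (bracketSq_pos k) s t

lemma wt_half_sq (s : ℝ) (k : Fin d → ℤ) : wt (s / 2) k ^ 2 = wt s k := by
  rw [sq, ← wt_add, add_halves]

lemma wt_neg (s : ℝ) (k : Fin d → ℤ) : wt s (-k) = wt s k := by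
  simp only [wt_eq_bracketSq_rpow, bracketSq_neg]

lemma wt_mono {s t : ℝ} (h : s ≤ t) (k : Fin d → ℤ) : wt s k ≤ wt t k :=
  Real.rpow_le_rpow_of_exponent_le (one_le_bracketSq k) h

lemma one_le_wt {s : ℝ} (hs : 0 ≤ s) (k : Fin d → ℤ) : 1 ≤ wt s k :=
  Real.one_le_rpow (one_le_bracketSq k) hs

lemma abs_coord_le_wt_half (k : Fin d → ℤ) (i : Fin d) : |(k i : ℝ)| ≤ wt (1 / 2) k := by
  refine abs_le_of_sq_le_sq ?_ (wt_nonneg _ k)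
  rw [wt_half_sq, wt_one]
  linarith [sq_coord_le_bracketSq_sub_one k i]

lemma abs_sum_mul_le_wt_half (k l : Fin d → ℤ) :
    |∑ i, (k i : ℝ) * l i| ≤ wt (1 / 2) k * wt (1 / 2) l := by
  refine abs_le_of_sq_le_sq ?_ (mul_nonneg (wt_nonneg _ k) (wt_nonneg _ l))
  rw [mul_pow, wt_half_sq, wt_half_sq, wt_one, wt_one]
  calc (∑ i, (k i : ℝ) * l i) ^ 2 ≤ (∑ i, (k i : ℝ) ^ 2) * ∑ i, (l i : ℝ) ^ 2 :=
        Finset.sum_mul_sq_le_sq_mul_sq _ _ _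
    _ ≤ bracketSq k * bracketSq l := by
        unfold bracketSq
        gcongr <;> linarith

lemma bracketSq_add_le (m τ : Fin d → ℤ) :
    bracketSq (m + τ) ≤ 2 * bracketSq τ * bracketSq m := by
  have hsum : ∑ i, (((m + τ) i : ℤ) : ℝ) ^ 2 ≤
      2 * (∑ i, (m i : ℝ) ^ 2 + ∑ i, (τ i : ℝ) ^ 2) := by
    rw [← Finset.sum_add_distrib, Finset.mul_sum]
    gcongr with i
    rw [Pi.add_apply, Int.cast_add]
    exact add_sq_le
  have hm : 0 ≤ ∑ i, (m i : ℝ) ^ 2 := Finset.sum_nonneg fun _ _ ↦ sq_nonneg _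
  have hτ : 0 ≤ ∑ i, (τ i : ℝ) ^ 2 := Finset.sum_nonneg fun _ _ ↦ sq_nonneg _
  unfold bracketSq
  nlinarith

lemma bracketSq_le_add (m τ : Fin d → ℤ) :
    bracketSq m ≤ 2 * bracketSq τ * bracketSq (m + τ) := by
  simpa only [add_neg_cancel_right, bracketSq_neg] using bracketSq_add_le (m + τ) (-τ)

lemma wt_add_le (s : ℝ) (m τ : Fin d → ℤ) :
    wt s (m + τ) ≤ 2 ^ |s| * wt |s| τ * wt s m := by
  simpa only [wt_eq_bracketSq_rpow, Real.mul_rpow zero_le_two (bracketSq_pos τ).le] using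
    rpow_le_rpow_abs_mul_rpow (bracketSq_pos m) (bracketSq_pos (m + τ)) (bracketSq_add_le m τ)
      (bracketSq_le_add m τ) s

lemma abs_bracketSq_add_sub_le (m τ : Fin d → ℤ) :
    |bracketSq (m + τ) - bracketSq m| ≤ 3 * wt 1 τ * wt (1 / 2) m := by
  have hsum := abs_sum_mul_le_wt_half m τ
  have hmono := wt_mono (by norm_num : (1 / 2 : ℝ) ≤ 1) τ
  have hm := one_le_wt (by norm_num : (0 : ℝ) ≤ 1 / 2) m
  have hτ := one_le_wt zero_le_one τ
  calc |bracketSq (m + τ) - bracketSq m|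
      = |2 * ∑ i, (m i : ℝ) * τ i + (wt 1 τ - 1)| := by
        rw [bracketSq_add, add_sub_cancel_left, wt_one]
    _ ≤ 2 * |∑ i, (m i : ℝ) * τ i| + (wt 1 τ - 1) := by
        refine (abs_add_le _ _).trans_eq ?_
        rw [abs_mul, abs_two, abs_of_nonneg (sub_nonneg.mpr hτ)]
    _ ≤ 3 * wt 1 τ * wt (1 / 2) m := by nlinarith

lemma abs_wt_add_sub_le (s : ℝ) (m τ : Fin d → ℤ) :
    |wt s (m + τ) - wt s m| ≤
      3 * |s| * 2 ^ |s - 1| * wt (|s - 1| + 1) τ * wt (s - 1 / 2) m := by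
  have hdiff := abs_rpow_sub_rpow_le (bracketSq_pos m) (by linarith [one_le_bracketSq τ])
    (bracketSq_add_le m τ) (bracketSq_le_add m τ) s
  rw [Real.mul_rpow zero_le_two (bracketSq_pos τ).le] at hdiff
  simp only [← wt_eq_bracketSq_rpow] at hdiff
  calc |wt s (m + τ) - wt s m|
      ≤ |s| * (2 ^ |s - 1| * wt |s - 1| τ * wt (s - 1) m) * (3 * wt 1 τ * wt (1 / 2) m) :=
        hdiff.trans (mul_le_mul_of_nonneg_left (abs_bracketSq_add_sub_le m τ)
          (by have := wt_nonneg (s - 1) m; have := wt_nonneg |s - 1| τ; positivity))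
    _ = _ := by
        rw [wt_add _ 1, show s - 1 / 2 = s - 1 + 1 / 2 by ring, wt_add]
        ring

/-- The remainder after linearising `q ↦ q ^ s` at `q = bracketSq m`; the linear part is left in
terms of `bracketSq`, whose second difference is independent of `m`. -/
lemma abs_wt_add_sub_linear_le (s : ℝ) (m τ : Fin d → ℤ) :
    |wt s (m + τ) - wt s m - s * wt (s - 1) m * (bracketSq (m + τ) - bracketSq m)| ≤
      9 * |s| * |s - 1| * 2 ^ |s - 2| * wt (|s - 2| + 2) τ * wt (s - 1) m := by
  have hrem := abs_rpow_sub_linear_le (bracketSq_pos m) (by linarith [one_le_bracketSq τ])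
    (bracketSq_add_le m τ) (bracketSq_le_add m τ) s
  rw [Real.mul_rpow zero_le_two (bracketSq_pos τ).le] at hrem
  simp only [← wt_eq_bracketSq_rpow] at hrem
  have hcoef : 0 ≤ |s| * |s - 1| * (2 ^ |s - 2| * wt |s - 2| τ * wt (s - 2) m) := by
    have := wt_nonneg (s - 2) m
    have := wt_nonneg |s - 2| τ
    positivity
  calc |wt s (m + τ) - wt s m - s * wt (s - 1) m * (bracketSq (m + τ) - bracketSq m)|
      ≤ |s| * |s - 1| * (2 ^ |s - 2| * wt |s - 2| τ * wt (s - 2) m) *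
          (3 * wt 1 τ * wt (1 / 2) m) ^ 2 :=
        hrem.trans (by gcongr; exact abs_bracketSq_add_sub_le m τ)
    _ = _ := by
        rw [show |s - 2| + 2 = |s - 2| + 1 + 1 by ring, wt_add, wt_add,
          show s - 1 = s - 2 + 1 by ring, wt_add, ← wt_half_sq 1 m]
        ring

end Weights

section ShiftedSums

lemma summable_mul_of_common_fst {ι κ : Type*} {g : ι × κ → ℝ} (hg : Summable g)
    (hg0 : ∀ p, 0 ≤ g p) :
    Summable fun p : ι × κ × κ ↦ g (p.1, p.2.1) * g (p.1, p.2.2) := by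
  have hinj : Function.Injective fun p : ι × κ × κ ↦
      (((p.1, p.2.1), (p.1, p.2.2)) : (ι × κ) × ι × κ) := by
    rintro ⟨i, j, k⟩ ⟨i', j', k'⟩ h
    simp_all only [Prod.mk.injEq]
  exact (hg.mul_of_nonneg hg hg0 hg0).comp_injective hinj

variable {κ G : Type*} [AddGroup G] {g : κ → ℝ} {E : G → ℝ}

lemma hasSum_shift_sq_add_sq (hE : Summable fun m ↦ E m ^ 2) (τ : G) :
    HasSum (fun m ↦ (E (m + τ) ^ 2 + E m ^ 2) / 2) (∑' m, E m ^ 2) := by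
  have hshift : HasSum (fun m ↦ E (m + τ) ^ 2) (∑' m, E m ^ 2) :=
    ((Equiv.addRight τ).hasSum_iff (f := fun m ↦ E m ^ 2)).mpr hE.hasSum
  simpa only [add_self_div_two] using (hshift.add hE.hasSum).div_const 2

lemma summable_and_tsum_mul_shift_le (hg : Summable g) (hg0 : ∀ k, 0 ≤ g k) (τ : κ → G)
    (hE : Summable fun m ↦ E m ^ 2) :
    (Summable fun p : κ × G ↦ g p.1 * (E (p.2 + τ p.1) * E p.2)) ∧
      ∑' p : κ × G, g p.1 * (E (p.2 + τ p.1) * E p.2) ≤ (∑' k, g k) * ∑' m, E m ^ 2 := by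
  have hfiber (k : κ) := (hasSum_shift_sq_add_sq hE (τ k)).mul_left (g k)
  have hmajorant :
      Summable fun p : κ × G ↦ g p.1 * ((E (p.2 + τ p.1) ^ 2 + E p.2 ^ 2) / 2) := by
    rw [summable_prod_of_nonneg fun p ↦ mul_nonneg (hg0 _) (by positivity)]
    refine ⟨fun k ↦ (hfiber k).summable, ?_⟩
    simp only [(hfiber _).tsum_eq]
    exact hg.mul_right _
  have hle (p : κ × G) : |g p.1 * (E (p.2 + τ p.1) * E p.2)| ≤
      g p.1 * ((E (p.2 + τ p.1) ^ 2 + E p.2 ^ 2) / 2) := by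
    rw [abs_mul, abs_of_nonneg (hg0 _), abs_mul]
    refine mul_le_mul_of_nonneg_left ?_ (hg0 _)
    linarith [two_mul_le_add_sq |E (p.2 + τ p.1)| |E p.2|, sq_abs (E (p.2 + τ p.1)),
      sq_abs (E p.2)]
  have hsum := Summable.of_norm_bounded (f := fun p : κ × G ↦ g p.1 * (E (p.2 + τ p.1) * E p.2))
    hmajorant hle
  refine ⟨hsum, (hsum.tsum_le_tsum (fun p ↦ (le_abs_self _).trans (hle p)) hmajorant).trans_eq ?_⟩
  rw [hmajorant.tsum_prod]
  simp only [(hfiber _).tsum_eq]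
  exact tsum_mul_right

end ShiftedSums

section Symbols

/-- A Fourier mode of a vector field: a component together with a frequency. -/
abbrev Mode (d : ℕ) := Fin d × (Fin d → ℤ)

/-- A symbol `σ a b m`, real coefficient of the trilinear interaction in which the frequency `m` is
moved to `m + b.2` by the mode `b`, and then to `m + (b.2 + a.2)` by the mode `a`. -/
abbrev Symbol (d : ℕ) := Mode d → Mode d → (Fin d → ℤ) → ℝ

/-- `σ` has order `t`: it is `O(⟨m⟩ ^ t)`, with polynomial loss in the frequencies of the modes. -/
def IsOfOrder (t : ℝ) (σ : Symbol d) : Prop :=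
  ∃ C N : ℝ, 0 ≤ C ∧ 0 ≤ N ∧
    ∀ a b m, |σ a b m| ≤ C * (wt N a.2 * wt N b.2) * wt (t / 2) m

/-- Lattice shifts depending on two modes whose size is controlled by that of the modes. -/
def IsModerateShift (τ : Mode d → Mode d → Fin d → ℤ) : Prop :=
  ∀ a b, bracketSq (τ a b) ≤ 2 * (bracketSq a.2 * bracketSq b.2)

variable {t t₁ t₂ : ℝ} {σ σ₁ σ₂ : Symbol d} {τ : Mode d → Mode d → Fin d → ℤ}

lemma isModerateShift_fst : IsModerateShift fun a _ : Mode d ↦ a.2 := fun a b ↦ by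
  nlinarith [one_le_bracketSq a.2, one_le_bracketSq b.2]

lemma isModerateShift_snd : IsModerateShift fun _ b : Mode d ↦ b.2 := fun a b ↦ by
  nlinarith [one_le_bracketSq a.2, one_le_bracketSq b.2]

lemma isModerateShift_zero : IsModerateShift fun _ _ : Mode d ↦ 0 := fun a b ↦ by
  have hzero : bracketSq (0 : Fin d → ℤ) = 1 := by simp [bracketSq]
  nlinarith [one_le_bracketSq a.2, one_le_bracketSq b.2]

lemma isModerateShift_add : IsModerateShift fun a b : Mode d ↦ b.2 + a.2 := fun a b ↦
  (bracketSq_add_le b.2 a.2).trans_eq (mul_assoc _ _ _)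

lemma IsModerateShift.wt_le (hτ : IsModerateShift τ) {N : ℝ} (hN : 0 ≤ N) (a b : Mode d) :
    wt N (τ a b) ≤ 2 ^ N * (wt N a.2 * wt N b.2) := by
  simp only [wt_eq_bracketSq_rpow]
  rw [← Real.mul_rpow (bracketSq_pos _).le (bracketSq_pos _).le,
    ← Real.mul_rpow zero_le_two (mul_pos (bracketSq_pos _) (bracketSq_pos _)).le]
  exact Real.rpow_le_rpow (bracketSq_pos _).le (hτ a b) hN

lemma IsModerateShift.isOfOrder (hτ : IsModerateShift τ) {C N : ℝ}
    (h : ∀ a b m, |σ a b m| ≤ C * wt N (τ a b) * wt (t / 2) m) : IsOfOrder t σ := by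
  refine ⟨|C| * 2 ^ |N|, |N|, by positivity, abs_nonneg N, fun a b m ↦ (h a b m).trans ?_⟩
  have hN : wt N (τ a b) ≤ 2 ^ |N| * (wt |N| a.2 * wt |N| b.2) :=
    (wt_mono (le_abs_self N) _).trans (hτ.wt_le (abs_nonneg N) a b)
  rw [mul_assoc |C|]
  exact mul_le_mul_of_nonneg_right
    (mul_le_mul (le_abs_self C) hN (wt_nonneg _ _) (abs_nonneg C)) (wt_nonneg _ m)

namespace IsOfOrder

lemma congr_order (h : IsOfOrder t₁ σ) (ht : t₁ = t₂) : IsOfOrder t₂ σ := ht ▸ h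

lemma add (h₁ : IsOfOrder t σ₁) (h₂ : IsOfOrder t σ₂) : IsOfOrder t (σ₁ + σ₂) := by
  obtain ⟨C₁, N₁, hC₁, hN₁, h₁⟩ := h₁
  obtain ⟨C₂, N₂, hC₂, -, h₂⟩ := h₂
  refine ⟨C₁ + C₂, max N₁ N₂, by positivity, le_max_of_le_left hN₁, fun a b m ↦ ?_⟩
  have hwt (l : Fin d → ℤ) := wt_nonneg (t / 2) l
  have hwt' (l : Fin d → ℤ) := wt_nonneg (max N₁ N₂) l
  rw [add_mul, add_mul]
  refine (abs_add_le _ _).trans (add_le_add ((h₁ a b m).trans ?_) ((h₂ a b m).trans ?_))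
  · gcongr
    exacts [hwt m, wt_nonneg _ _, hwt' _, wt_mono (le_max_left _ _) _, wt_mono (le_max_left _ _) _]
  · gcongr
    exacts [hwt m, wt_nonneg _ _, hwt' _, wt_mono (le_max_right _ _) _,
      wt_mono (le_max_right _ _) _]

lemma neg (h : IsOfOrder t σ) : IsOfOrder t (-σ) := by
  simpa only [IsOfOrder, Pi.neg_apply, abs_neg] using h

lemma sub (h₁ : IsOfOrder t σ₁) (h₂ : IsOfOrder t σ₂) : IsOfOrder t (σ₁ - σ₂) := by
  rw [sub_eq_add_neg]
  exact h₁.add h₂.neg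

lemma mul (h₁ : IsOfOrder t₁ σ₁) (h₂ : IsOfOrder t₂ σ₂) : IsOfOrder (t₁ + t₂) (σ₁ * σ₂) := by
  obtain ⟨C₁, N₁, hC₁, hN₁, h₁⟩ := h₁
  obtain ⟨C₂, N₂, hC₂, hN₂, h₂⟩ := h₂
  refine ⟨C₁ * C₂, N₁ + N₂, by positivity, by positivity, fun a b m ↦ ?_⟩
  calc |σ₁ a b m * σ₂ a b m| = |σ₁ a b m| * |σ₂ a b m| := abs_mul _ _
    _ ≤ C₁ * (wt N₁ a.2 * wt N₁ b.2) * wt (t₁ / 2) m *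
          (C₂ * (wt N₂ a.2 * wt N₂ b.2) * wt (t₂ / 2) m) :=
        mul_le_mul (h₁ a b m) (h₂ a b m) (abs_nonneg _) ((abs_nonneg _).trans (h₁ a b m))
    _ = _ := by
        rw [add_div, wt_add, wt_add, wt_add]
        ring

lemma const_smul (h : IsOfOrder t σ) (c : ℝ) : IsOfOrder t (c • σ) := by
  obtain ⟨C, N, hC, hN, h⟩ := h
  refine ⟨|c| * C, N, by positivity, hN, fun a b m ↦ ?_⟩
  calc |c * σ a b m| = |c| * |σ a b m| := abs_mul _ _
    _ ≤ |c| * (C * (wt N a.2 * wt N b.2) * wt (t / 2) m) := by gcongr; exact h a b m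
    _ = _ := by ring

end IsOfOrder

namespace IsModerateShift

lemma isOfOrder_coord (hτ : IsModerateShift τ) (i : Mode d → Mode d → Fin d) :
    IsOfOrder 1 fun a b m ↦ ((m + τ a b) (i a b) : ℝ) :=
  hτ.isOfOrder fun _ _ _ ↦
    (abs_coord_le_wt_half _ _).trans (wt_add_le _ _ _)

lemma isOfOrder_shift_coord (hτ : IsModerateShift τ) (i : Mode d → Mode d → Fin d) :
    IsOfOrder 0 fun a b _ ↦ (τ a b (i a b) : ℝ) :=
  hτ.isOfOrder (C := 1) (N := 1 / 2) fun _ _ m ↦ by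
    rw [zero_div, wt_zero, mul_one, one_mul]
    exact abs_coord_le_wt_half _ _

lemma isOfOrder_wt (hτ : IsModerateShift τ) (s : ℝ) :
    IsOfOrder (2 * s) fun a b m ↦ wt s (m + τ a b) :=
  hτ.isOfOrder fun _ _ m ↦ by
    rw [mul_div_cancel_left₀ s two_ne_zero, abs_of_pos (wt_pos _ _)]
    exact wt_add_le _ _ _

lemma isOfOrder_wt_sub (hτ : IsModerateShift τ) (s : ℝ) :
    IsOfOrder (2 * s - 1) fun a b m ↦ wt s (m + τ a b) - wt s m :=
  hτ.isOfOrder fun _ _ m ↦ by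
    rw [sub_div, mul_div_cancel_left₀ s two_ne_zero]
    exact abs_wt_add_sub_le _ _ _

lemma isOfOrder_wt_sub_linear (hτ : IsModerateShift τ) (s : ℝ) :
    IsOfOrder (2 * s - 2) fun a b m ↦ wt s (m + τ a b) - wt s m -
      s * wt (s - 1) m * (bracketSq (m + τ a b) - bracketSq m) :=
  hτ.isOfOrder fun _ _ m ↦ by
    rw [show (2 * s - 2) / 2 = s - 1 by ring]
    exact abs_wt_add_sub_linear_le _ _ _

end IsModerateShift

lemma isOfOrder_sum_mul :
    IsOfOrder 0 fun (a b : Mode d) _ ↦ ∑ i, (a.2 i : ℝ) * b.2 i := by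
  refine ⟨1, 1 / 2, zero_le_one, one_half_pos.le, fun a b m ↦ ?_⟩
  rw [zero_div, wt_zero, one_mul, mul_one]
  exact abs_sum_mul_le_wt_half a.2 b.2

lemma bracketSq_second_difference (m α β : Fin d → ℤ) :
    bracketSq (m + (β + α)) - bracketSq (m + β) - bracketSq (m + α) + bracketSq m =
      2 * ∑ i, (α i : ℝ) * β i := by
  rw [bracketSq_add, bracketSq_add, bracketSq_add, bracketSq_add]
  simp only [Pi.add_apply, Int.cast_add, mul_add, Finset.sum_add_distrib, mul_comm (β _ : ℝ)]
  ring

lemma isOfOrder_wt_second_difference (s : ℝ) : IsOfOrder (2 * s - 2) fun (a b : Mode d) m ↦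
    wt s (m + (b.2 + a.2)) - wt s (m + b.2) - wt s (m + a.2) + wt s m := by
  have hwt : IsOfOrder (2 * s - 2) fun (_ _ : Mode d) m ↦ wt (s - 1) (m + 0) :=
    (isModerateShift_zero.isOfOrder_wt (s - 1)).congr_order (by ring)
  have hmain := ((hwt.mul isOfOrder_sum_mul).const_smul (2 * s)).congr_order (add_zero _)
  have hrem : IsOfOrder (d := d) (2 * s - 2) _ :=
    ((isModerateShift_add.isOfOrder_wt_sub_linear s).sub
      (isModerateShift_snd.isOfOrder_wt_sub_linear s)).sub
        (isModerateShift_fst.isOfOrder_wt_sub_linear s)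
  convert hmain.add hrem using 4 with a b m
  simp only [Pi.add_apply, Pi.sub_apply, Pi.mul_apply, Pi.smul_apply, smul_eq_mul, add_zero]
  linear_combination s * wt (s - 1) m * bracketSq_second_difference m a.2 b.2

/-- The symbol of `(𝓛²_{ξ_k} f, f)_{H^s}`. -/
def innerSymbol (s : ℝ) : Symbol d := fun a b m ↦
  -(wt s (m + (b.2 + a.2)) * ((m + (b.2 + a.2)) a.1 : ℝ) * ((m + b.2) b.1 : ℝ))

/-- The symbol of `‖𝓛_{ξ_k} f‖²_{H^s}`. -/
def normSymbol (s : ℝ) : Symbol d := fun a b m ↦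
  wt s (m + b.2) * ((m + b.2) a.1 : ℝ) * ((m + b.2) b.1 : ℝ)

/-- The mode of the opposite frequency, which carries the conjugate coefficient of a real field. -/
def Mode.reflect (a : Mode d) : Mode d := (a.1, -a.2)

/-- The adjoint symbol: conjugating a trilinear sum runs through each path backwards. -/
def Symbol.adjoint (σ : Symbol d) : Symbol d := fun a b m ↦
  σ b.reflect a.reflect (m + (b.2 + a.2))

/-- The symbol of the quadratic form `2 (Re (𝓛²_{ξ_k} f, f)_{H^s} + ‖𝓛_{ξ_k} f‖²_{H^s})`. -/
def energySymbol (s : ℝ) : Symbol d :=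
  innerSymbol s + (innerSymbol s).adjoint + (2 : ℝ) • normSymbol s

lemma adjoint_innerSymbol_apply (s : ℝ) (a b : Mode d) (m : Fin d → ℤ) :
    (innerSymbol s).adjoint a b m = -(wt s m * (m b.1 : ℝ) * ((m + b.2) a.1 : ℝ)) := by
  have hend : m + (b.2 + a.2) + (-a.2 + -b.2) = m := by abel
  have hmid : m + (b.2 + a.2) + -a.2 = m + b.2 := by abel
  simp only [Symbol.adjoint, innerSymbol, Mode.reflect, hend, hmid]

lemma isOfOrder_innerSymbol (s : ℝ) : IsOfOrder (2 * (s + 1)) (innerSymbol (d := d) s) :=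
  (((isModerateShift_add.isOfOrder_wt s).mul
    (isModerateShift_add.isOfOrder_coord fun a _ ↦ a.1)).mul
    (isModerateShift_snd.isOfOrder_coord fun _ b ↦ b.1)).neg.congr_order (by ring)

lemma isOfOrder_normSymbol (s : ℝ) : IsOfOrder (2 * (s + 1)) (normSymbol (d := d) s) :=
  (((isModerateShift_snd.isOfOrder_wt s).mul
    (isModerateShift_snd.isOfOrder_coord fun a _ ↦ a.1)).mul
    (isModerateShift_snd.isOfOrder_coord fun _ b ↦ b.1)).congr_order (by ring)

/-- The product of the derivative symbols at the intermediate frequency `m + b.2`; exchanging the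
modes moves it to the other intermediate frequency `m + a.2`. -/
def midSymbol : Symbol d := fun a b m ↦ ((m + b.2) a.1 : ℝ) * ((m + b.2) b.1 : ℝ)

lemma energySymbol_add_swap (s : ℝ) (a b : Mode d) (m : Fin d → ℤ) :
    energySymbol s a b m + energySymbol s b a m =
      -((midSymbol a b m + midSymbol b a m) *
          (wt s (m + (b.2 + a.2)) - wt s (m + b.2) - wt s (m + a.2) + wt s m) +
        (midSymbol a b m - midSymbol b a m) * (wt s (m + a.2) - wt s (m + b.2)) +
        (wt s (m + (b.2 + a.2)) - wt s m) *
          ((a.2 a.1 : ℝ) * (m b.1 : ℝ) + (b.2 b.1 : ℝ) * (m a.1 : ℝ)) +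
        2 * wt s (m + (b.2 + a.2)) * ((a.2 a.1 : ℝ) * (b.2 b.1 : ℝ)) -
        wt s m * ((b.2 a.1 : ℝ) * (b.2 b.1 : ℝ) + (a.2 a.1 : ℝ) * (a.2 b.1 : ℝ))) := by
  simp only [energySymbol, Pi.add_apply, Pi.smul_apply, smul_eq_mul, adjoint_innerSymbol_apply,
    innerSymbol, normSymbol, midSymbol, add_comm a.2 b.2, Int.cast_add]
  ring

lemma isOfOrder_midSymbol : IsOfOrder 2 (midSymbol (d := d)) :=
  ((isModerateShift_snd.isOfOrder_coord fun a _ ↦ a.1).mul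
    (isModerateShift_snd.isOfOrder_coord fun _ b ↦ b.1)).congr_order one_add_one_eq_two

lemma isOfOrder_midSymbol_swap : IsOfOrder 2 fun (a b : Mode d) m ↦ midSymbol b a m :=
  ((isModerateShift_fst.isOfOrder_coord fun _ b ↦ b.1).mul
    (isModerateShift_fst.isOfOrder_coord fun a _ ↦ a.1)).congr_order one_add_one_eq_two

lemma isOfOrder_midSymbol_sub_swap :
    IsOfOrder 1 fun (a b : Mode d) m ↦ midSymbol a b m - midSymbol b a m := by
  have hdiff (i : Mode d → Mode d → Fin d) :
      IsOfOrder 0 fun a b _ ↦ (b.2 (i a b) : ℝ) - (a.2 (i a b) : ℝ) :=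
    (isModerateShift_snd.isOfOrder_shift_coord i).sub
      (isModerateShift_fst.isOfOrder_shift_coord i)
  have hleft := ((hdiff fun a _ ↦ a.1).mul
    (isModerateShift_snd.isOfOrder_coord fun _ b ↦ b.1)).congr_order (zero_add 1)
  have hright := ((isModerateShift_fst.isOfOrder_coord fun a _ ↦ a.1).mul
    (hdiff fun _ b ↦ b.1)).congr_order (add_zero 1)
  convert hleft.add hright using 4 with a b m
  simp only [midSymbol, Pi.add_apply, Pi.mul_apply, Int.cast_add]
  ring

lemma isOfOrder_energySymbol_add_swap (s : ℝ) :
    IsOfOrder (2 * s) fun (a b : Mode d) m ↦ energySymbol s a b m + energySymbol s b a m := by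
  simp only [energySymbol_add_swap]
  have hα (i : Mode d → Mode d → Fin d) := isModerateShift_fst.isOfOrder_shift_coord i
  have hβ (i : Mode d → Mode d → Fin d) := isModerateShift_snd.isOfOrder_shift_coord i
  have hm (i : Mode d → Mode d → Fin d) : IsOfOrder 1 fun a b m ↦ (m (i a b) : ℝ) := by
    simpa only [add_zero] using isModerateShift_zero.isOfOrder_coord i
  have hwt : IsOfOrder (2 * s) fun (_ _ : Mode d) m ↦ wt s m := by
    simpa only [add_zero] using (isModerateShift_zero (d := d)).isOfOrder_wt s
  have hsecond := ((isOfOrder_midSymbol.add isOfOrder_midSymbol_swap).mul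
    (isOfOrder_wt_second_difference (d := d) s)).congr_order (add_sub_cancel 2 (2 * s))
  have hfirst : IsOfOrder (2 * s - 1) fun (a b : Mode d) m ↦ wt s (m + a.2) - wt s (m + b.2) := by
    simpa only [Pi.sub_def, sub_sub_sub_cancel_right] using
      (isModerateShift_fst.isOfOrder_wt_sub s).sub (isModerateShift_snd.isOfOrder_wt_sub s)
  have hmid := (isOfOrder_midSymbol_sub_swap.mul hfirst).congr_order (add_sub_cancel 1 (2 * s))
  have hcross := ((isModerateShift_add.isOfOrder_wt_sub s).mul
    (((hα fun a _ ↦ a.1).mul (hm fun _ b ↦ b.1)).add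
      ((hβ fun _ b ↦ b.1).mul (hm fun a _ ↦ a.1)))).congr_order
    (show 2 * s - 1 + (0 + 1) = 2 * s by ring)
  have hend := (((isModerateShift_add.isOfOrder_wt s).const_smul 2).mul
    ((hα fun a _ ↦ a.1).mul (hβ fun _ b ↦ b.1))).congr_order
    (show 2 * s + (0 + 0) = 2 * s by ring)
  have hstart := (hwt.mul (((hβ fun a _ ↦ a.1).mul (hβ fun _ b ↦ b.1)).add
    ((hα fun a _ ↦ a.1).mul (hα fun _ b ↦ b.1)))).congr_order
    (show 2 * s + (0 + 0) = 2 * s by ring)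
  exact ((((hsecond.add hmid).add hcross).add hend).sub hstart).neg

end Symbols

section TrilinearSums

lemma hsNorm_sq (s : ℝ) (c : FCd d) : hsNorm s c ^ 2 = ∑' k, wt s k * ‖c k‖ ^ 2 :=
  Real.sq_sqrt (tsum_nonneg fun k ↦ mul_nonneg (wt_nonneg s k) (sq_nonneg _))

lemma memHs.mono {s t : ℝ} {c : FCd d} (hst : s ≤ t) (hc : memHs t c) : memHs s c :=
  Summable.of_nonneg_of_le (fun k ↦ mul_nonneg (wt_nonneg s k) (sq_nonneg _))
    (fun k ↦ mul_le_mul_of_nonneg_right (wt_mono hst k) (sq_nonneg _)) hc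

/-- A sequence of vector fields which is smooth with summable seminorms, expressed in the Wiener
algebra scale: every polynomially weighted `ℓ¹` norm of all Fourier coefficients is finite. -/
def IsSmoothSeq (ξ : ℕ → Fin d → FCd d) : Prop :=
  ∀ N : ℝ, 0 ≤ N → Summable fun p : ℕ × Mode d ↦ wt N p.2.2 * ‖ξ p.1 p.2.1 p.2.2‖

/-- A path `((k, a, b), m)`: the modes `b`, then `a`, of `ξ_k` take the frequency `m` to
`m + (b.2 + a.2)`. -/
abbrev Path (d : ℕ) := (ℕ × Mode d × Mode d) × (Fin d → ℤ)

/-- The coefficient with which a path enters the quadratic forms in `f`, up to its symbol. -/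
def amplitude (ξ : ℕ → Fin d → FCd d) (f : FCd d) : Path d → ℂ
  | ((k, a, b), m) =>
    ξ k a.1 a.2 * ξ k b.1 b.2 * (f m * (starRingEnd ℂ) (f (m + (b.2 + a.2))))

/-- The term of the quadratic form with symbol `σ` that belongs to a path. -/
def pathTerm (σ : Symbol d) (ξ : ℕ → Fin d → FCd d) (f : FCd d) (z : Path d) : ℂ :=
  σ z.1.2.1 z.1.2.2 z.2 * amplitude ξ f z

variable {t : ℝ} {σ : Symbol d} {ξ : ℕ → Fin d → FCd d}

lemma wt_le_mul_wt_endpoints (t : ℝ) (a b : Mode d) (m : Fin d → ℤ) :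
    wt t m ≤ 2 ^ |t / 2| * 2 ^ |t / 2| * (wt |t / 2| a.2 * wt |t / 2| b.2) *
      (wt (t / 2) (m + (b.2 + a.2)) * wt (t / 2) m) := by
  have hpeetre : wt (t / 2) m ≤
      2 ^ |t / 2| * wt |t / 2| (b.2 + a.2) * wt (t / 2) (m + (b.2 + a.2)) := by
    simpa only [add_neg_cancel_right, wt_neg] using
      wt_add_le (t / 2) (m + (b.2 + a.2)) (-(b.2 + a.2))
  have hsplit := isModerateShift_add.wt_le (abs_nonneg (t / 2)) a b
  have hm := wt_nonneg (t / 2) m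
  have hn := wt_nonneg (t / 2) (m + (b.2 + a.2))
  calc wt t m = wt (t / 2) m * wt (t / 2) m := by rw [← wt_add, add_halves]
    _ ≤ 2 ^ |t / 2| * (2 ^ |t / 2| * (wt |t / 2| a.2 * wt |t / 2| b.2)) *
          wt (t / 2) (m + (b.2 + a.2)) * wt (t / 2) m := by
        refine mul_le_mul_of_nonneg_right (hpeetre.trans ?_) hm
        gcongr
    _ = _ := by ring

lemma IsOfOrder.exists_norm_pathTerm_le (hσ : IsOfOrder (2 * t) σ) :
    ∃ C N : ℝ, 0 ≤ C ∧ 0 ≤ N ∧ ∀ (ξ : ℕ → Fin d → FCd d) (f : FCd d) k a b m,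
      ‖pathTerm σ ξ f ((k, a, b), m)‖ ≤
        C * ((wt N a.2 * ‖ξ k a.1 a.2‖) * (wt N b.2 * ‖ξ k b.1 b.2‖) *
          ((wt (t / 2) (m + (b.2 + a.2)) * ‖f (m + (b.2 + a.2))‖) * (wt (t / 2) m * ‖f m‖))) := by
  obtain ⟨C, N, hC, hN, hσ⟩ := hσ
  refine ⟨C * (2 ^ |t / 2| * 2 ^ |t / 2|), N + |t / 2|, by positivity, by positivity,
    fun ξ f k a b m ↦ ?_⟩
  have hsymbol := hσ a b m
  rw [mul_div_cancel_left₀ t two_ne_zero] at hsymbol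
  have hloss : 0 ≤ C * (wt N a.2 * wt N b.2) :=
    mul_nonneg hC (mul_nonneg (wt_nonneg _ _) (wt_nonneg _ _))
  have hbound := hsymbol.trans (mul_le_mul_of_nonneg_left (wt_le_mul_wt_endpoints t a b m) hloss)
  rw [pathTerm, amplitude, norm_mul, Complex.norm_real, Real.norm_eq_abs]
  refine (mul_le_mul_of_nonneg_right hbound (norm_nonneg _)).trans_eq ?_
  simp only [norm_mul, RCLike.norm_conj, wt_add]
  ring

lemma memHs.summable_sq_wt_half_mul_norm {f : FCd d} (hf : memHs t f) :
    Summable fun m ↦ (wt (t / 2) m * ‖f m‖) ^ 2 := by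
  simp only [mul_pow, wt_half_sq]
  exact hf

lemma IsOfOrder.exists_norm_tsum_pathTerm_le (hσ : IsOfOrder (2 * t) σ) (hξ : IsSmoothSeq ξ) :
    ∃ C, 0 ≤ C ∧ ∀ f, memHs t f →
      Summable (pathTerm σ ξ f) ∧ ‖∑' z, pathTerm σ ξ f z‖ ≤ C * hsNorm t f ^ 2 := by
  obtain ⟨C, N, hC, hN, hbound⟩ := hσ.exists_norm_pathTerm_le
  let g : ℕ × Mode d → ℝ := fun p ↦ wt N p.2.2 * ‖ξ p.1 p.2.1 p.2.2‖
  have hg0 (p : ℕ × Mode d) : 0 ≤ g p := mul_nonneg (wt_nonneg _ _) (norm_nonneg _)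
  have hgg0 (κ : ℕ × Mode d × Mode d) : 0 ≤ g (κ.1, κ.2.1) * g (κ.1, κ.2.2) :=
    mul_nonneg (hg0 _) (hg0 _)
  refine ⟨C * ∑' κ : ℕ × Mode d × Mode d, g (κ.1, κ.2.1) * g (κ.1, κ.2.2),
    mul_nonneg hC (tsum_nonneg hgg0), fun f hf ↦ ?_⟩
  obtain ⟨hsum, hle⟩ := summable_and_tsum_mul_shift_le
    (summable_mul_of_common_fst (g := g) (hξ N hN) hg0) hgg0 (fun κ ↦ κ.2.2.2 + κ.2.1.2)
    hf.summable_sq_wt_half_mul_norm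
  refine ⟨(hsum.mul_left C).of_norm_bounded fun z ↦ hbound ξ f _ _ _ _, ?_⟩
  calc ‖∑' z, pathTerm σ ξ f z‖ ≤ C * _ :=
        tsum_of_norm_bounded (hsum.hasSum.mul_left C) fun z ↦ hbound ξ f _ _ _ _
    _ ≤ C * _ := mul_le_mul_of_nonneg_left hle hC
    _ = _ := by simp only [mul_pow, wt_half_sq, hsNorm_sq, mul_assoc]

/-- The involution running through a path backwards. -/
def reversePath : Path d ≃ Path d :=
  Function.Involutive.toPerm
    (fun | ((k, a, b), m) => ((k, b.reflect, a.reflect), m + (b.2 + a.2)))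
    fun ((k, a, b), m) ↦ by
      have hm : m + (b.2 + a.2) + (-a.2 + -b.2) = m := by abel
      simp only [Mode.reflect, neg_neg, hm]

/-- The involution exchanging the two modes of a path. -/
def swapModes : Path d ≃ Path d :=
  Function.Involutive.toPerm (fun | ((k, a, b), m) => ((k, b, a), m)) fun _ ↦ rfl

lemma amplitude_reversePath (hξ : ∀ k i, isReal (ξ k i)) (f : FCd d) (z : Path d) :
    amplitude ξ f (reversePath z) = (starRingEnd ℂ) (amplitude ξ f z) := by
  obtain ⟨⟨k, a, b⟩, m⟩ := z
  have hm : m + (b.2 + a.2) + (-a.2 + -b.2) = m := by abel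
  change ξ k b.1 (-b.2) * ξ k a.1 (-a.2) * (f (m + (b.2 + a.2)) *
    (starRingEnd ℂ) (f (m + (b.2 + a.2) + (-a.2 + -b.2)))) = _
  simp only [hξ k _ _, hm, amplitude, map_mul, Complex.conj_conj]
  ring

lemma pathTerm_adjoint (hξ : ∀ k i, isReal (ξ k i)) (σ : Symbol d) (f : FCd d) (z : Path d) :
    pathTerm σ.adjoint ξ f z = (starRingEnd ℂ) (pathTerm σ ξ f (reversePath z)) := by
  rw [pathTerm, pathTerm, map_mul, amplitude_reversePath hξ, Complex.conj_conj,
    Complex.conj_ofReal]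
  rfl

lemma pathTerm_swapModes (σ : Symbol d) (ξ : ℕ → Fin d → FCd d) (f : FCd d) (z : Path d) :
    pathTerm σ ξ f (swapModes z) = pathTerm (fun a b m ↦ σ b a m) ξ f z := by
  obtain ⟨⟨k, a, b⟩, m⟩ := z
  change (σ b a m : ℂ) * (ξ k b.1 b.2 * ξ k a.1 a.2 *
    (f m * (starRingEnd ℂ) (f (m + (a.2 + b.2))))) = _
  simp only [pathTerm, amplitude, mul_comm (ξ k b.1 b.2), add_comm a.2]

lemma hasSum_pathTerm_energySymbol (hξ : ∀ k i, isReal (ξ k i)) {s : ℝ} {f : FCd d} {A B : ℂ}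
    (hA : HasSum (pathTerm (innerSymbol s) ξ f) A) (hB : HasSum (pathTerm (normSymbol s) ξ f) B) :
    HasSum (pathTerm (energySymbol s) ξ f) (A + (starRingEnd ℂ) A + 2 * B) := by
  have hA' : HasSum (pathTerm (innerSymbol s).adjoint ξ f) ((starRingEnd ℂ) A) := by
    rw [funext (pathTerm_adjoint hξ (innerSymbol s) f), Complex.hasSum_conj']
    exact reversePath.hasSum_iff.mpr hA
  convert (hA.add hA').add (hB.mul_left 2) using 2 with z
  simp only [pathTerm, energySymbol, Pi.add_apply, Pi.smul_apply, smul_eq_mul]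
  push_cast
  ring

lemma hasSum_pathTerm_add_swap {f : FCd d} {T : ℂ} (hT : HasSum (pathTerm σ ξ f) T) :
    HasSum (pathTerm (fun a b m ↦ σ a b m + σ b a m) ξ f) (T + T) := by
  convert hT.add (swapModes.hasSum_iff.mpr hT) using 2 with z
  rw [Function.comp_apply, pathTerm_swapModes]
  simp only [pathTerm]
  push_cast
  ring

/-- Conjugation symmetrises the inner product term, and exchanging the two modes then cancels the
two highest orders of the symbol. -/
lemma exists_abs_re_tsum_pathTerm_le (s : ℝ) (hξ : IsSmoothSeq ξ) (hreal : ∀ k i, isReal (ξ k i)) :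
    ∃ C, 0 ≤ C ∧ ∀ f, memHs (s + 1) f →
      |(∑' z, pathTerm (innerSymbol s) ξ f z).re + (∑' z, pathTerm (normSymbol s) ξ f z).re| ≤
        C * hsNorm s f ^ 2 := by
  obtain ⟨_, -, hinner⟩ := (isOfOrder_innerSymbol s).exists_norm_tsum_pathTerm_le hξ
  obtain ⟨_, -, hnorm⟩ := (isOfOrder_normSymbol s).exists_norm_tsum_pathTerm_le hξ
  obtain ⟨C, hC, hsymm⟩ := (isOfOrder_energySymbol_add_swap s).exists_norm_tsum_pathTerm_le hξ
  refine ⟨C / 4, by positivity, fun f hf ↦ ?_⟩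
  set A := ∑' z, pathTerm (innerSymbol s) ξ f z
  set B := ∑' z, pathTerm (normSymbol s) ξ f z
  have henergy := hasSum_pathTerm_energySymbol hreal (hinner f hf).1.hasSum (hnorm f hf).1.hasSum
  have hbound := (hsymm f (hf.mono (by linarith))).2
  rw [(hasSum_pathTerm_add_swap henergy).tsum_eq] at hbound
  have hre : (A + (starRingEnd ℂ) A + 2 * B + (A + (starRingEnd ℂ) A + 2 * B)).re =
      4 * (A.re + B.re) := by
    simp only [Complex.add_re, Complex.conj_re, Complex.mul_re, Complex.re_ofNat,
      Complex.im_ofNat, zero_mul, sub_zero]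
    ring
  replace hbound := (Complex.abs_re_le_norm _).trans hbound
  rw [hre, abs_mul, abs_of_pos four_pos] at hbound
  linarith

end TrilinearSums

section FourierSide

lemma memHs.wt_half_mul_norm_le {t : ℝ} {c : FCd d} (hc : memHs t c) (m : Fin d → ℤ) :
    wt (t / 2) m * ‖c m‖ ≤ hsNorm t c := by
  refine Real.le_sqrt_of_sq_le ?_
  rw [mul_pow, wt_half_sq]
  exact hc.le_tsum m fun k _ ↦ mul_nonneg (wt_nonneg t k) (sq_nonneg _)

lemma norm_deriv_apply_le (i : Fin d) (c : FCd d) (m : Fin d → ℤ) :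
    ‖deriv i c m‖ ≤ wt (1 / 2) m * ‖c m‖ := by
  rw [deriv, norm_mul, norm_mul, Complex.norm_I, one_mul, Complex.norm_intCast]
  exact mul_le_mul_of_nonneg_right (abs_coord_le_wt_half m i) (norm_nonneg _)

lemma memHs.deriv {t : ℝ} {c : FCd d} (hc : memHs t c) (i : Fin d) :
    memHs (t - 1) (FCd.deriv i c) := by
  refine Summable.of_nonneg_of_le (fun k ↦ mul_nonneg (wt_nonneg _ k) (sq_nonneg _))
    (fun k ↦ ?_) hc
  calc wt (t - 1) k * ‖FCd.deriv i c k‖ ^ 2 ≤ wt (t - 1) k * (wt (1 / 2) k * ‖c k‖) ^ 2 := by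
        gcongr
        exacts [wt_nonneg _ k, norm_deriv_apply_le i c k]
    _ = wt t k * ‖c k‖ ^ 2 := by rw [mul_pow, wt_half_sq, ← mul_assoc, ← wt_add, sub_add_cancel]

/-- Smoothness in the Wiener algebra scale: every polynomially weighted `ℓ¹` norm of the Fourier
coefficients is finite. -/
def IsSmooth (c : FCd d) : Prop := ∀ N : ℝ, 0 ≤ N → Summable fun m ↦ wt N m * ‖c m‖

lemma IsSmooth.deriv {c : FCd d} (hc : IsSmooth c) (i : Fin d) : IsSmooth (FCd.deriv i c) := by
  intro N hN
  refine Summable.of_nonneg_of_le (fun m ↦ mul_nonneg (wt_nonneg N m) (norm_nonneg _))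
    (fun m ↦ ?_) (hc (N + 1 / 2) (by positivity))
  rw [wt_add, mul_assoc]
  exact mul_le_mul_of_nonneg_left (norm_deriv_apply_le i c m) (wt_nonneg N m)

lemma IsSmoothSeq.isSmooth {ξ : ℕ → Fin d → FCd d} (hξ : IsSmoothSeq ξ) (k : ℕ) (i : Fin d) :
    IsSmooth (ξ k i) := fun N hN ↦
  (hξ N hN).comp_injective (i := fun m ↦ (k, i, m)) fun _ _ h ↦ by simpa using h

lemma IsSmooth.hasSum_mul {t : ℝ} {c e : FCd d} (hc : IsSmooth c) (he : memHs t e)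
    (n : Fin d → ℤ) : HasSum (fun j ↦ c j * e (n - j)) (mul c e n) := by
  refine Summable.hasSum (Summable.of_norm_bounded
    ((hc |-(t / 2)| (abs_nonneg _)).mul_right (2 ^ |-(t / 2)| * wt (-(t / 2)) n * hsNorm t e))
    fun j ↦ ?_)
  have hcancel : wt (-(t / 2)) (n - j) * wt (t / 2) (n - j) = 1 := by
    rw [← wt_add, neg_add_cancel, wt_zero]
  have hpeetre : wt (-(t / 2)) (n - j) ≤ 2 ^ |-(t / 2)| * wt |-(t / 2)| j * wt (-(t / 2)) n := by
    simpa only [← sub_eq_add_neg, wt_neg] using wt_add_le (-(t / 2)) n (-j)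
  calc ‖c j * e (n - j)‖
      = ‖c j‖ * (wt (-(t / 2)) (n - j) * (wt (t / 2) (n - j) * ‖e (n - j)‖)) := by
        rw [norm_mul, ← mul_assoc (wt _ _), hcancel, one_mul]
    _ ≤ ‖c j‖ * (2 ^ |-(t / 2)| * wt |-(t / 2)| j * wt (-(t / 2)) n * hsNorm t e) := by
        refine mul_le_mul_of_nonneg_left ?_ (norm_nonneg _)
        exact mul_le_mul hpeetre (he.wt_half_mul_norm_le _)
          (mul_nonneg (wt_nonneg _ _) (norm_nonneg _)) ((wt_nonneg _ _).trans hpeetre)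
    _ = _ := by ring

lemma hasSum_prod_of_fintype {ι κ M : Type*} [Fintype ι] [AddCommMonoid M] [TopologicalSpace M]
    [ContinuousAdd M] {f : ι × κ → M} {g : ι → M} (h : ∀ i, HasSum (fun k ↦ f (i, k)) (g i)) :
    HasSum f (∑ i, g i) := by
  classical
  have hslice (i : ι) : HasSum (fun p : ι × κ ↦ if p.1 = i then f p else 0) (g i) := by
    refine ((Prod.mk_right_injective i).hasSum_iff fun p hp ↦ if_neg ?_).mp ?_
    · rintro rfl
      exact hp ⟨p.2, rfl⟩
    · simpa only [Function.comp_def, if_true] using h i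
  simpa only [Finset.sum_ite_eq, Finset.mem_univ, if_true] using
    hasSum_sum (s := Finset.univ) fun i _ ↦ hslice i

lemma hasSum_lie {t : ℝ} {ξ : Fin d → FCd d} {c : FCd d} (hξ : ∀ i, IsSmooth (ξ i))
    (hc : memHs t c) (n : Fin d → ℤ) :
    HasSum (fun a : Mode d ↦ Complex.I * (n a.1 : ℂ) * ξ a.1 a.2 * c (n - a.2)) (lie ξ c n) := by
  have hgrad (i : Fin d) := (hξ i).hasSum_mul (hc.deriv i) n
  have hdiv (i : Fin d) := ((hξ i).deriv i).hasSum_mul hc n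
  have hdiv_sum : mul (∑ i, deriv i (ξ i)) c n = ∑ i, mul (deriv i (ξ i)) c n := by
    rw [← (hasSum_sum fun i _ ↦ hdiv i).tsum_eq]
    simp only [mul, Finset.sum_apply, Finset.sum_mul]
  have hlie : lie ξ c n =
      ∑ i, (mul (ξ i) (deriv i c) n + mul (deriv i (ξ i)) c n) := by
    rw [lie, Pi.add_apply, Finset.sum_apply, hdiv_sum, Finset.sum_add_distrib]
  rw [hlie]
  refine hasSum_prod_of_fintype fun i ↦ ?_
  convert (hgrad i).add (hdiv i) using 2 with j
  simp only [deriv, Pi.sub_apply, Int.cast_sub]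
  ring

end FourierSide

section SobolevEmbedding

lemma wt_half_rpow (s : ℝ) (k : Fin d → ℤ) : wt (1 / 2) k ^ (2 * s) = wt s k := by
  rw [wt_eq_bracketSq_rpow, wt_eq_bracketSq_rpow, ← Real.rpow_mul (bracketSq_pos k).le]
  ring_nf

lemma summable_wt {s : ℝ} (hs : 2 * s < -d) : Summable (wt (d := d) s) := by
  let L := Submodule.span ℤ (Set.range (Pi.basisFun ℝ (Fin d)))
  let toLattice : (Fin d → ℤ) → L := fun k ↦ ⟨fun i ↦ k i,
    ((Pi.basisFun ℝ (Fin d)).mem_span_iff_repr_mem ℤ _).mpr fun i ↦ ⟨k i, by simp⟩⟩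
  have hinj : Function.Injective toLattice := fun k l h ↦ funext fun i ↦
    Int.cast_injective (congrFun (congrArg Subtype.val h) i)
  have hzero : toLattice 0 = 0 := Subtype.ext (funext fun _ ↦ Int.cast_zero)
  have hrank : Module.finrank ℤ L = d := by
    rw [ZLattice.rank ℝ L, Module.finrank_fin_fun]
  have hs0 : 2 * s ≤ 0 := hs.le.trans (neg_nonpos.mpr d.cast_nonneg)
  have hsum := (ZLattice.summable_norm_rpow L (2 * s) (by rwa [hrank])).comp_injective hinj
  refine hsum.of_norm_bounded_eventually ?_
  filter_upwards [(Set.finite_singleton (0 : Fin d → ℤ)).compl_mem_cofinite] with k hk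
  have hpos : 0 < ‖toLattice k‖ := norm_pos_iff.mpr fun h ↦ hk (hinj (h.trans hzero.symm))
  have hle : ‖toLattice k‖ ≤ wt (1 / 2) k :=
    (pi_norm_le_iff_of_nonneg (wt_nonneg _ k)).mpr fun i ↦ abs_coord_le_wt_half k i
  rw [Real.norm_of_nonneg (wt_nonneg s k), ← wt_half_rpow]
  exact Real.rpow_le_rpow_of_nonpos hpos hle hs0

lemma memHs.summable_and_tsum_wt_mul_norm_le {N t : ℝ} {c : FCd d} (ht : 2 * N + d / 2 < t)
    (hc : memHs t c) :
    (Summable fun k ↦ wt N k * ‖c k‖) ∧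
      ∑' k, wt N k * ‖c k‖ ≤ √(∑' k : Fin d → ℤ, wt (2 * N - t) k) * hsNorm t c := by
  have hsplit (k : Fin d → ℤ) :
      wt ((2 * N - t) / 2) k * (wt (t / 2) k * ‖c k‖) = wt N k * ‖c k‖ := by
    rw [← mul_assoc, ← wt_add]
    ring_nf
  have hcauchy := Real.summable_and_inner_le_Lp_mul_Lq_tsum_of_nonneg
    (f := fun k : Fin d → ℤ ↦ wt ((2 * N - t) / 2) k) (g := fun k ↦ wt (t / 2) k * ‖c k‖)
    Real.HolderConjugate.two_two (fun k ↦ wt_nonneg _ k)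
    (fun k ↦ mul_nonneg (wt_nonneg _ k) (norm_nonneg _))
  simp only [Real.rpow_two, mul_pow, wt_half_sq, hsplit, ← Real.sqrt_eq_rpow] at hcauchy
  exact hcauchy (summable_wt (by linarith)) hc

lemma hsNorm_le_vecNorm (s : ℝ) (ξ : Fin d → FCd d) (i : Fin d) : hsNorm s (ξ i) ≤ vecNorm s ξ :=
  Real.le_sqrt_of_sq_le
    (Finset.single_le_sum (f := fun i ↦ hsNorm s (ξ i) ^ 2) (fun _ _ ↦ sq_nonneg _)
      (Finset.mem_univ i))

lemma isSmoothSeq_of_summable_vecNorm {ξ : ℕ → Fin d → FCd d}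
    (hmem : ∀ σ : ℝ, 0 ≤ σ → ∀ k i, memHs σ (ξ k i))
    (hsum : ∀ σ : ℝ, 0 ≤ σ → Summable fun k ↦ vecNorm σ (ξ k)) : IsSmoothSeq ξ := by
  intro N hN
  let t := 2 * N + d / 2 + 1
  let K := √(∑' k : Fin d → ℤ, wt (2 * N - t) k)
  have ht : 0 ≤ t := by positivity
  have hnonneg (k : ℕ) (a : Mode d) : 0 ≤ wt N a.2 * ‖ξ k a.1 a.2‖ :=
    mul_nonneg (wt_nonneg _ _) (norm_nonneg _)
  have hcomponent (k : ℕ) (i : Fin d) :=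
    (hmem t ht k i).summable_and_tsum_wt_mul_norm_le (lt_add_one (2 * N + d / 2))
  have hfield (k : ℕ) : HasSum (fun a : Mode d ↦ wt N a.2 * ‖ξ k a.1 a.2‖)
      (∑ i, ∑' m, wt N m * ‖ξ k i m‖) :=
    hasSum_prod_of_fintype fun i ↦ (hcomponent k i).1.hasSum
  have hle (k : ℕ) : ∑ i, ∑' m, wt N m * ‖ξ k i m‖ ≤ d * K * vecNorm t (ξ k) := by
    calc ∑ i, ∑' m, wt N m * ‖ξ k i m‖ ≤ ∑ _i : Fin d, K * vecNorm t (ξ k) :=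
          Finset.sum_le_sum fun i _ ↦ (hcomponent k i).2.trans
            (mul_le_mul_of_nonneg_left (hsNorm_le_vecNorm t (ξ k) i) (Real.sqrt_nonneg _))
      _ = d * K * vecNorm t (ξ k) := by
          rw [Finset.sum_const, Finset.card_univ, Fintype.card_fin, nsmul_eq_mul, mul_assoc]
  rw [summable_prod_of_nonneg fun p ↦ hnonneg p.1 p.2]
  refine ⟨fun k ↦ (hfield k).summable, ?_⟩
  simp only [(hfield _).tsum_eq]
  exact Summable.of_nonneg_of_le
    (fun k ↦ (hfield k).nonneg fun a ↦ hnonneg k a) hle ((hsum t ht).mul_left (d * K))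

end SobolevEmbedding

section QuadraticForms

variable {s t : ℝ} {ξ : ℕ → Fin d → FCd d} {f : FCd d}

/-- Paths, labelled by their modes and by the frequency `m + τ a b`. -/
def shiftPaths (τ : Mode d → Mode d → Fin d → ℤ) :
    (ℕ × Mode d × Mode d) × (Fin d → ℤ) ≃ Path d :=
  Equiv.prodShear (Equiv.refl _) fun κ ↦ Equiv.subRight (τ κ.2.1 κ.2.2)

/-- Paths, labelled by the final frequency, then by the modes. -/
def pathsByEnd : (Fin d → ℤ) × ℕ × Mode d × Mode d ≃ Path d :=
  (Equiv.prodComm _ _).trans (shiftPaths fun a b ↦ b.2 + a.2)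

/-- Paths, labelled by the index of the vector field, then by the intermediate frequency, then by
the modes. -/
def pathsByMiddle : ℕ × (Fin d → ℤ) × Mode d × Mode d ≃ Path d :=
  ((Equiv.refl _).prodCongr (Equiv.prodComm _ _)).trans
    ((Equiv.prodAssoc _ _ _).symm.trans (shiftPaths fun _ b ↦ b.2))

lemma pathTerm_innerSymbol_pathsByEnd (s : ℝ) (ξ : ℕ → Fin d → FCd d) (f : FCd d)
    (n : Fin d → ℤ) (k : ℕ) (a b : Mode d) :
    pathTerm (innerSymbol s) ξ f (pathsByEnd (n, k, a, b)) =
      (wt s n : ℂ) * (Complex.I * (n a.1 : ℂ) * ξ k a.1 a.2 *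
        (Complex.I * ((n - a.2) b.1 : ℂ) * ξ k b.1 b.2 * f (n - a.2 - b.2)) *
          (starRingEnd ℂ) (f n)) := by
  have hend : n - (b.2 + a.2) + (b.2 + a.2) = n := sub_add_cancel _ _
  have hmid : n - (b.2 + a.2) + b.2 = n - a.2 := by abel
  have hstart : n - a.2 - b.2 = n - (b.2 + a.2) := by abel
  change ((innerSymbol s a b (n - (b.2 + a.2)) : ℝ) : ℂ) *
    amplitude ξ f ((k, a, b), n - (b.2 + a.2)) = _
  simp only [innerSymbol, amplitude, hend, hmid, hstart, Complex.ofReal_neg, Complex.ofReal_mul,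
    Complex.ofReal_intCast]
  linear_combination -((wt s n : ℂ) * (n a.1 : ℂ) * ((n - a.2) b.1 : ℂ) * ξ k a.1 a.2 *
    ξ k b.1 b.2 * f (n - (b.2 + a.2)) * (starRingEnd ℂ) (f n)) * Complex.I_sq

lemma hsInner_eq_re_tsum_pathTerm (hξ : ∀ k i, IsSmooth (ξ k i)) (hf : memHs t f)
    (hlie : ∀ k, memHs s (lie (ξ k) f)) (hsum : Summable (pathTerm (innerSymbol s) ξ f)) :
    hsInner s (tsumFCd fun k ↦ lie2 (ξ k) f) f = (∑' z, pathTerm (innerSymbol s) ξ f z).re := by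
  have hsum' : Summable fun u ↦ pathTerm (innerSymbol s) ξ f (pathsByEnd u) :=
    (pathsByEnd.summable_iff (f := pathTerm (innerSymbol s) ξ f)).mpr hsum
  rw [hsInner, ← pathsByEnd.tsum_eq, hsum'.tsum_prod]
  congr 2 with n
  have hn := hsum'.prod_factor n
  rw [hn.tsum_prod, tsumFCd, ← tsum_mul_right, ← tsum_mul_left]
  refine tsum_congr fun k ↦ ?_
  rw [(hn.prod_factor k).tsum_prod, lie2, ← (hasSum_lie (hξ k) (hlie k) n).tsum_eq,
    ← tsum_mul_right, ← tsum_mul_left]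
  refine tsum_congr fun a ↦ ?_
  rw [← (hasSum_lie (hξ k) hf (n - a.2)).tsum_eq, ← tsum_mul_left, ← tsum_mul_right,
    ← tsum_mul_left]
  exact tsum_congr fun b ↦ (pathTerm_innerSymbol_pathsByEnd s ξ f n k a b).symm

lemma hasSum_conj_lie {η : Fin d → FCd d} {c : FCd d} (hη : ∀ i, IsSmooth (η i))
    (hreal : ∀ i, isReal (η i)) (hc : memHs t c) (n : Fin d → ℤ) :
    HasSum (fun a : Mode d ↦
        -(Complex.I * (n a.1 : ℂ) * η a.1 a.2 * (starRingEnd ℂ) (c (n + a.2))))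
      ((starRingEnd ℂ) (lie η c n)) := by
  let reflectMode : Mode d ≃ Mode d := (Equiv.refl _).prodCongr (Equiv.neg _)
  have hterm (a : Mode d) : (starRingEnd ℂ) (Complex.I * (n a.1 : ℂ) * η a.1 (-a.2) *
      c (n - -a.2)) = -(Complex.I * (n a.1 : ℂ) * η a.1 a.2 * (starRingEnd ℂ) (c (n + a.2))) := by
    rw [sub_neg_eq_add, hreal a.1 a.2]
    simp only [map_mul, Complex.conj_I, Complex.conj_conj, map_intCast]
    ring
  exact (funext hterm) ▸ reflectMode.hasSum_iff.mpr (Complex.hasSum_conj'.mpr (hasSum_lie hη hc n))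

lemma pathTerm_normSymbol_pathsByMiddle (s : ℝ) (ξ : ℕ → Fin d → FCd d) (f : FCd d) (k : ℕ)
    (p : Fin d → ℤ) (a b : Mode d) :
    pathTerm (normSymbol s) ξ f (pathsByMiddle (k, p, a, b)) =
      (wt s p : ℂ) * (-(Complex.I * (p a.1 : ℂ) * ξ k a.1 a.2 * (starRingEnd ℂ) (f (p + a.2))) *
        (Complex.I * (p b.1 : ℂ) * ξ k b.1 b.2 * f (p - b.2))) := by
  have hmid : p - b.2 + b.2 = p := sub_add_cancel _ _
  have hend : p - b.2 + (b.2 + a.2) = p + a.2 := by abel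
  change ((normSymbol s a b (p - b.2) : ℝ) : ℂ) * amplitude ξ f ((k, a, b), p - b.2) = _
  simp only [normSymbol, amplitude, hend, hmid, Complex.ofReal_mul, Complex.ofReal_intCast]
  linear_combination ((wt s p : ℂ) * (p a.1 : ℂ) * (p b.1 : ℂ) * ξ k a.1 a.2 *
    ξ k b.1 b.2 * f (p - b.2) * (starRingEnd ℂ) (f (p + a.2))) * Complex.I_sq

lemma tsum_pathTerm_normSymbol_pathsByMiddle (hξ : ∀ k i, IsSmooth (ξ k i))
    (hreal : ∀ k i, isReal (ξ k i)) (hf : memHs t f)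
    (hsum : Summable (pathTerm (normSymbol s) ξ f)) (k : ℕ) (p : Fin d → ℤ) :
    ∑' κ, pathTerm (normSymbol s) ξ f (pathsByMiddle (k, p, κ)) =
      ((wt s p * ‖lie (ξ k) f p‖ ^ 2 : ℝ) : ℂ) := by
  have hsum' : Summable fun u ↦ pathTerm (normSymbol s) ξ f (pathsByMiddle u) :=
    (pathsByMiddle.summable_iff (f := pathTerm (normSymbol s) ξ f)).mpr hsum
  have hp := (hsum'.prod_factor k).prod_factor p
  rw [Complex.ofReal_mul, Complex.ofReal_pow, ← Complex.conj_mul', hp.tsum_prod,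
    ← (hasSum_conj_lie (hξ k) (hreal k) hf p).tsum_eq, ← tsum_mul_right, ← tsum_mul_left]
  refine tsum_congr fun a ↦ ?_
  rw [← (hasSum_lie (hξ k) hf p).tsum_eq, ← tsum_mul_left, ← tsum_mul_left]
  exact tsum_congr fun b ↦ pathTerm_normSymbol_pathsByMiddle s ξ f k p a b

lemma memHs_lie (hξ : ∀ k i, IsSmooth (ξ k i)) (hreal : ∀ k i, isReal (ξ k i)) (hf : memHs t f)
    (hsum : Summable (pathTerm (normSymbol s) ξ f)) (k : ℕ) : memHs s (lie (ξ k) f) := by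
  have hk := ((pathsByMiddle.summable_iff.mpr hsum).prod_factor k).prod
  simp only [Function.comp_apply, tsum_pathTerm_normSymbol_pathsByMiddle hξ hreal hf hsum] at hk
  exact Complex.summable_ofReal.mp hk

lemma hasSum_hsNorm_lie_sq (hξ : ∀ k i, IsSmooth (ξ k i)) (hreal : ∀ k i, isReal (ξ k i))
    (hf : memHs t f) (hsum : Summable (pathTerm (normSymbol s) ξ f)) :
    HasSum (fun k ↦ hsNorm s (lie (ξ k) f) ^ 2) (∑' z, pathTerm (normSymbol s) ξ f z).re := by
  have hsum' := pathsByMiddle.summable_iff.mpr hsum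
  have hk (k : ℕ) : HasSum (fun u ↦ pathTerm (normSymbol s) ξ f (pathsByMiddle (k, u)))
      ((hsNorm s (lie (ξ k) f) ^ 2 : ℝ) : ℂ) := by
    have hvalue := (hsum'.prod_factor k).tsum_prod
    simp only [Function.comp_apply, tsum_pathTerm_normSymbol_pathsByMiddle hξ hreal hf hsum,
      ← Complex.ofReal_tsum, ← hsNorm_sq] at hvalue
    exact hvalue ▸ (hsum'.prod_factor k).hasSum
  have htotal := (pathsByMiddle.hasSum_iff.mpr hsum.hasSum).prod_fiberwise hk
  simpa only [Complex.ofReal_re] using Complex.hasSum_re htotal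

end QuadraticForms

end FCd

theorem statement7_general (d : ℕ) (s : ℝ) (ξ : ℕ → Fin d → FCd d)
    (hξmem : ∀ σ : ℝ, 0 ≤ σ → ∀ k : ℕ, ∀ i, FCd.memHs σ (ξ k i))
    (hξreal : ∀ k : ℕ, ∀ i, FCd.isReal (ξ k i))
    (hξsum : ∀ σ : ℝ, 0 ≤ σ → Summable fun k : ℕ => FCd.vecNorm σ (ξ k)) :
    ∃ C > (0 : ℝ), ∀ f : FCd d, FCd.memHs (s + 1) f →
      Summable (fun k : ℕ => FCd.hsNorm s (FCd.lie (ξ k) f) ^ 2) ∧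
      |FCd.hsInner s (FCd.tsumFCd fun k => FCd.lie2 (ξ k) f) f
          + ∑' k : ℕ, FCd.hsNorm s (FCd.lie (ξ k) f) ^ 2|
        ≤ C * FCd.hsNorm s f ^ 2 := by
  have hseq := FCd.isSmoothSeq_of_summable_vecNorm hξmem hξsum
  obtain ⟨_, -, hinner⟩ := (FCd.isOfOrder_innerSymbol s).exists_norm_tsum_pathTerm_le hseq
  obtain ⟨_, -, hnorm⟩ := (FCd.isOfOrder_normSymbol s).exists_norm_tsum_pathTerm_le hseq
  obtain ⟨C, hC, hbound⟩ := FCd.exists_abs_re_tsum_pathTerm_le s hseq hξreal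
  refine ⟨C + 1, by positivity, fun f hf ↦ ?_⟩
  have hlie := FCd.memHs_lie hseq.isSmooth hξreal hf (hnorm f hf).1
  have hsum := FCd.hasSum_hsNorm_lie_sq hseq.isSmooth hξreal hf (hnorm f hf).1
  refine ⟨hsum.summable, ?_⟩
  rw [hsum.tsum_eq, FCd.hsInner_eq_re_tsum_pathTerm hseq.isSmooth hf hlie (hinner f hf).1]
  exact (hbound f hf).trans (by gcongr; linarith)

/-- Let `d ≥ 1`, `s > d/2 + 1` and let `(ξ_k)` be vector fields on `𝕋^d`
with `Σ_k ‖ξ_k‖_{H^σ} < ∞` for every `σ ≥ 0`.  Then there is `C > 0` such that for every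
scalar `f ∈ H^{s+2}(𝕋^d)`:
`(D^s Σ_k 𝓛²_{ξ_k} f, D^s f)_{L²} + Σ_k ‖D^s 𝓛_{ξ_k} f‖²_{L²} ≤ C ‖f‖²_{H^s}`. -/
theorem statement7 (d : ℕ) (hd : 1 ≤ d) (s : ℝ) (hs : (d : ℝ) / 2 + 1 < s)
    (ξ : ℕ → Fin d → FCd d)
    (hξmem : ∀ σ : ℝ, 0 ≤ σ → ∀ k : ℕ, ∀ i, FCd.memHs σ (ξ k i))
    (hξreal : ∀ k : ℕ, ∀ i, FCd.isReal (ξ k i))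
    (hξsum : ∀ σ : ℝ, 0 ≤ σ → Summable fun k : ℕ => FCd.vecNorm σ (ξ k)) :
    ∃ C > (0 : ℝ), ∀ f : FCd d, FCd.memHs (s + 2) f → FCd.isReal f →
      Summable (fun k : ℕ => FCd.hsNorm s (FCd.lie (ξ k) f) ^ 2) ∧
      FCd.hsInner s (FCd.tsumFCd fun k => FCd.lie2 (ξ k) f) f
          + ∑' k : ℕ, FCd.hsNorm s (FCd.lie (ξ k) f) ^ 2
        ≤ C * FCd.hsNorm s f ^ 2 := by
  obtain ⟨C, hC, hbound⟩ := statement7_general d s ξ hξmem hξreal hξsum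
  exact ⟨C, hC, fun f hf _ ↦ (hbound f (hf.mono (by linarith))).imp_right (le_abs_self _).trans⟩
end
end
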